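/- arXiv:1611.10099 — 12 statements merged into one kernel-verified Lean document; each statement's English description precedes it below -/
import Mathlib

section
/- Let ε₁, ε₂, ε₃ be nonnegative real numbers and let H : D → ℝ satisfy: (i) |H(x,y,z) − H(σ(x),σ(y),σ(z))| ≤ ε₁ for all (x,y,z) ∈ D and every permutation σ of the three coordinates; (ii) |H(x,y,z) − H(x+y,0,z) − H(x,y,0)| ≤ ε₂ for all (x,y,z) ∈ D°; (iii) |H(tx,ty,0) − t·H(x,y,0)| ≤ ε₃ for all t,x,y > 0 (approximate positive homogeneity of degree α = 1). Then there exists a function φ : ℝ₊₊ → ℝ satisfying φ(xy) = x·φ(y) + y·φ(x) for all x,y > 0 such that |H(x,y,z) − [φ(x+y+z) − φ(x) − φ(y) − φ(z)]| ≤ ε₁ + ε₂ for all (x,y,z) ∈ D°. -/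
open scoped NNReal

theorem ent_smooth_real : Algebra.FormallySmooth ℤ ℝ := by
  have h1 : Algebra.FormallySmooth ℚ ℝ := by
    obtain ⟨s, hs⟩ := exists_isTranscendenceBasis ℚ ℝ
    have := hs.isAlgebraic_field
    exact .of_algebraicIndependent_of_isSeparable hs.1
  have h2 : Algebra.FormallySmooth ℤ ℚ := .of_isLocalization (nonZeroDivisors ℤ)
  exact .comp _ ℚ _

def entCon (S : Type) [CommSemiring S] [IsCancelAdd S] :
    RingCon (QuadraticAlgebra S 1 0) where
  r u v := u.re + v.im = v.re + u.im
  iseqv := ⟨fun _ => rfl, fun h => h.symm, by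
    intro u v w h1 h2
    apply add_right_cancel (b := v.re + v.im)
    calc u.re + w.im + (v.re + v.im) = (u.re + v.im) + (v.re + w.im) := by ring
      _ = (v.re + u.im) + (w.re + v.im) := by rw [h1, h2]
      _ = _ := by ring⟩
  add' := by
    intro a b c d h1 h2
    simp only [QuadraticAlgebra.re_add, QuadraticAlgebra.im_add]
    calc a.re + c.re + (b.im + d.im) = (a.re + b.im) + (c.re + d.im) := by ring
      _ = (b.re + a.im) + (d.re + c.im) := by rw [h1, h2]
      _ = _ := by ring
  mul' := by
    intro a b c d h1 h2
    simp only [QuadraticAlgebra.re_mul, QuadraticAlgebra.im_mul]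
    apply add_right_cancel (b := b.re * c.re + b.im * c.im + b.re * c.im + b.im * c.re)
    calc _ = (a.re + b.im) * c.re + (b.re + a.im) * c.im
          + b.re * (c.re + d.im) + b.im * (d.re + c.im) := by ring
      _ = (b.re + a.im) * c.re + (a.re + b.im) * c.im
          + b.re * (d.re + c.im) + b.im * (c.re + d.im) := by rw [h1, h2]
      _ = _ := by ring

theorem ent_groth (S : Type) [CommSemiring S] [IsCancelAdd S] (p : S →+* ℝ) :
    ∃ (R : Type) (_ : CommRing R) (ι : S →+* R) (π : R →+* ℝ),
      Function.Injective ι ∧ (∀ r, ∃ a b, r = ι a - ι b) ∧ ∀ a, π (ι a) = p a := by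
  let c := entCon S
  have hc : ∀ u v, c u v ↔ u.re + v.im = v.re + u.im := fun u v => Iff.rfl
  let w : QuadraticAlgebra S 1 0 := ⟨0, 1⟩
  have hw : ∀ x : c.Quotient, (w : c.Quotient) * x + x = 0 := by
    intro x
    induction x using Quotient.inductionOn' with
    | _ x =>
    change ((w * x + x : QuadraticAlgebra S 1 0) : c.Quotient) = ((0 : QuadraticAlgebra S 1 0) : c.Quotient)
    rw [c.eq, hc]
    simp [w]
    ring
  let inst : CommRing c.Quotient :=
    { (inferInstance : CommSemiring c.Quotient) with
      neg := fun x => (w : c.Quotient) * x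
      zsmul := @zsmulRec _ _ _ ⟨fun x => (w : c.Quotient) * x⟩ nsmulRec
      neg_add_cancel := hw }
  let ι : S →+* QuadraticAlgebra S 1 0 :=
    { toFun := fun a => ⟨a, 0⟩
      map_zero' := rfl
      map_one' := rfl
      map_add' := by intro a b; ext <;> simp
      map_mul' := by intro a b; ext <;> simp }
  let q : QuadraticAlgebra S 1 0 →+* ℝ :=
    { toFun := fun u => p u.re - p u.im
      map_zero' := by change p 0 - p 0 = 0; simp
      map_one' := by change p 1 - p 0 = 1; simp
      map_add' := by intro a b; simp; ring
      map_mul' := by intro a b; simp; ring }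
  have hq : c ≤ RingCon.ker q := by
    intro u v h
    rw [hc] at h
    change p u.re - p u.im = p v.re - p v.im
    have := congrArg p h
    simp only [map_add] at this
    linarith
  refine ⟨c.Quotient, inst, c.mk'.comp ι, c.lift q hq, ?_, ?_, ?_⟩
  · intro a b h
    have h' : ((ι a : QuadraticAlgebra S 1 0) : c.Quotient) = (ι b : QuadraticAlgebra S 1 0) := h
    rw [c.eq, hc] at h'
    simpa [ι] using h'
  · intro r
    induction r using Quotient.inductionOn' with
    | _ r =>
    refine ⟨r.re, r.im, ?_⟩
    refine eq_sub_iff_add_eq.mpr ?_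
    change ((r + ι r.im : QuadraticAlgebra S 1 0) : c.Quotient) = (ι r.re : QuadraticAlgebra S 1 0)
    rw [c.eq, hc]
    simp [ι]
    try ring
  · intro a
    change p a - p 0 = p a
    simp

structure EntCoc where
  f : ℝ≥0 → ℝ≥0 → ℝ
  zero : ∀ x, f 0 x = 0
  symm : ∀ x y, f x y = f y x
  assoc : ∀ x y z, f x y + f (x + y) z = f y z + f x (y + z)
  hom : ∀ t x y, f (t * x) (t * y) = t * f x y

@[ext] structure EntE (c : EntCoc) where
  fst : ℝ≥0
  snd : ℝ

namespace EntE
variable {c : EntCoc}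

instance : Add (EntE c) := ⟨fun a b => ⟨a.fst + b.fst, a.snd + b.snd + c.f a.fst b.fst⟩⟩
instance : Mul (EntE c) := ⟨fun a b => ⟨a.fst * b.fst, a.fst * b.snd + b.fst * a.snd⟩⟩
instance : Zero (EntE c) := ⟨⟨0, 0⟩⟩
instance : One (EntE c) := ⟨⟨1, 0⟩⟩

@[simp] theorem add_fst (a b : EntE c) : (a + b).fst = a.fst + b.fst := rfl
@[simp] theorem add_snd (a b : EntE c) : (a + b).snd = a.snd + b.snd + c.f a.fst b.fst := rfl
@[simp] theorem mul_fst (a b : EntE c) : (a * b).fst = a.fst * b.fst := rfl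
@[simp] theorem mul_snd (a b : EntE c) : (a * b).snd = a.fst * b.snd + b.fst * a.snd := rfl
@[simp] theorem zero_fst : (0 : EntE c).fst = 0 := rfl
@[simp] theorem zero_snd : (0 : EntE c).snd = 0 := rfl
@[simp] theorem one_fst : (1 : EntE c).fst = 1 := rfl
@[simp] theorem one_snd : (1 : EntE c).snd = 0 := rfl

theorem e_add_comm (a b : EntE c) : a + b = b + a := by
  ext
  · simp [add_comm]
  · simp [c.symm a.fst b.fst, add_comm]

theorem e_mul_comm (a b : EntE c) : a * b = b * a := by
  ext
  · simp [mul_comm]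
  · simp [add_comm]

theorem e_zero_add (a : EntE c) : 0 + a = a := by
  ext <;> simp [c.zero]

theorem e_one_mul (a : EntE c) : 1 * a = a := by
  ext <;> simp

theorem e_zero_mul (a : EntE c) : 0 * a = 0 := by
  ext <;> simp

theorem e_mul_add (a b d : EntE c) : a * (b + d) = a * b + a * d := by
  ext
  · simp [mul_add]
  · simp [c.hom]; ring

noncomputable instance : CommSemiring (EntE c) where
  add_assoc a b d := by
    ext
    · simp [add_assoc]
    · have := c.assoc a.fst b.fst d.fst
      simp; linarith
  zero_add := e_zero_add
  add_zero a := by rw [e_add_comm, e_zero_add]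
  add_comm := e_add_comm
  nsmul := nsmulRec
  left_distrib := e_mul_add
  right_distrib a b d := by rw [e_mul_comm, e_mul_add, e_mul_comm d a, e_mul_comm d b]
  zero_mul := e_zero_mul
  mul_zero a := by rw [e_mul_comm, e_zero_mul]
  mul_assoc a b d := by
    ext
    · simp [mul_assoc]
    · simp; ring
  one_mul := e_one_mul
  mul_one a := by rw [e_mul_comm, e_one_mul]
  mul_comm := e_mul_comm

instance : IsCancelAdd (EntE c) := by
  have h : ∀ a b d : EntE c, a + b = a + d → b = d := by
    intro a b d h
    have h1 := congrArg EntE.fst h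
    have h2 := congrArg EntE.snd h
    simp only [add_fst, add_right_inj] at h1
    simp only [add_snd, h1] at h2
    ext
    · rw [h1]
    · linarith
  exact { add_left_cancel := fun a b d => h a b d
          add_right_cancel := fun a b d e => h a b d (by
            rw [add_comm a b, add_comm a d]; exact e) }

noncomputable def proj : EntE c →+* ℝ where
  toFun a := a.fst
  map_zero' := rfl
  map_one' := rfl
  map_add' a b := by simp
  map_mul' a b := by simp

end EntE

theorem ent_solve (c : EntCoc) : ∃ ψ : ℝ≥0 → ℝ,
    (∀ x y, ψ (x * y) = x * ψ y + y * ψ x) ∧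
    (∀ x y, ψ (x + y) = ψ x + ψ y + c.f x y) := by
  obtain ⟨R, _, ι, π, hinj, hrep, hπ⟩ := ent_groth (EntE c) EntE.proj
  have hπ' : ∀ a, π (ι a) = a.fst := hπ
  have := ent_smooth_real
  let π' : R →ₐ[ℤ] ℝ := π.toIntAlgHom
  have hsurj : Function.Surjective π' := by
    intro x
    refine ⟨ι ⟨x.toNNReal, 0⟩ - ι ⟨(-x).toNNReal, 0⟩, ?_⟩
    change π _ = x
    rw [map_sub, hπ', hπ']
    simp only [Real.coe_toNNReal']
    rcases le_total 0 x with h | h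
    · rw [max_eq_left h, max_eq_right (by linarith)]; simp
    · rw [max_eq_right h, max_eq_left (by linarith)]; simp
  have hnil : IsNilpotent (RingHom.ker (π' : R →+* ℝ)) := by
    refine ⟨2, ?_⟩
    rw [pow_two, Ideal.zero_eq_bot, eq_bot_iff, Ideal.mul_le]
    intro r hr s hs
    obtain ⟨a, b, rfl⟩ := hrep r
    obtain ⟨d, e, rfl⟩ := hrep s
    have h1 : π (ι a - ι b) = 0 := hr
    have h2 : π (ι d - ι e) = 0 := hs
    rw [map_sub, hπ', hπ', sub_eq_zero, NNReal.coe_inj] at h1 h2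
    have : a * d + b * e = a * e + b * d := by
      ext
      · simp [h1, h2]
      · simp [h1, h2]; ring
    have h3 := congrArg ι this
    simp only [map_add, map_mul] at h3
    rw [Ideal.mem_bot]
    linear_combination h3
  let s : ℝ →ₐ[ℤ] R := Algebra.FormallySmooth.liftOfSurjective (AlgHom.id ℤ ℝ) π' hsurj hnil
  have hs : ∀ x, π (s x) = x :=
    Algebra.FormallySmooth.liftOfSurjective_apply (AlgHom.id ℤ ℝ) π' hsurj hnil
  have key : ∀ x : ℝ≥0, ∃ m : ℝ, s x = ι ⟨x, m⟩ := by
    intro x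
    obtain ⟨a, b, hab⟩ := hrep (s x)
    have h1 := hs x
    rw [hab, map_sub, hπ', hπ', sub_eq_iff_eq_add] at h1
    have h2 : a.fst = x + b.fst := by exact_mod_cast h1
    refine ⟨a.snd - b.snd - c.f x b.fst, ?_⟩
    rw [hab, sub_eq_iff_eq_add, ← map_add]
    congr 1
    ext
    · simp [h2]
    · simp; ring
  choose ψ hψ using key
  refine ⟨ψ, fun x y => ?_, fun x y => ?_⟩
  · have h : ι ⟨x * y, ψ (x * y)⟩ = ι (⟨x, ψ x⟩ * ⟨y, ψ y⟩) := by
      rw [map_mul, ← hψ, ← hψ, ← hψ, ← map_mul, NNReal.coe_mul]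
    exact congrArg EntE.snd (hinj h)
  · have h : ι ⟨x + y, ψ (x + y)⟩ = ι (⟨x, ψ x⟩ + ⟨y, ψ y⟩) := by
      rw [map_add, ← hψ, ← hψ, ← hψ, ← map_add, NNReal.coe_add]
    exact congrArg EntE.snd (hinj h)

theorem ent_zero_of_bdd (a C : ℝ) (h : ∀ t : ℝ, 0 < t → t * |a| ≤ C) : a = 0 := by
  by_contra ha
  have hp : 0 < |a| := abs_pos.mpr ha
  have hC : 0 ≤ C := le_trans (by positivity) (h 1 one_pos)
  have := h ((C + 1) / |a|) (by positivity)
  rw [div_mul_cancel₀ _ hp.ne'] at this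
  linarith

/-- Hyers–Ulam stability of the entropy equation, case α = 1:
if `H` is approximately symmetric on `D`, approximately satisfies the entropy
equation on `D°` and is approximately positively homogeneous of degree 1, then
`H` is close to a solution of the form `φ(x+y+z) − φ(x) − φ(y) − φ(z)` where
`φ(xy) = x·φ(y) + y·φ(x)`. -/
theorem entropy_equation_stability_alpha_one
    (ε₁ ε₂ ε₃ : ℝ) (hε₁ : 0 ≤ ε₁) (hε₂ : 0 ≤ ε₂) (hε₃ : 0 ≤ ε₃)
    (H : ℝ → ℝ → ℝ → ℝ)
    (hsym : ∀ x y z : ℝ, 0 ≤ x → 0 ≤ y → 0 ≤ z → 0 < x + y + z →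
      ∀ σ : Equiv.Perm (Fin 3),
        |H x y z - H (![x, y, z] (σ 0)) (![x, y, z] (σ 1)) (![x, y, z] (σ 2))| ≤ ε₁)
    (heq : ∀ x y z : ℝ, 0 < x → 0 < y → 0 < z →
      |H x y z - H (x + y) 0 z - H x y 0| ≤ ε₂)
    (hhom : ∀ t x y : ℝ, 0 < t → 0 < x → 0 < y →
      |H (t * x) (t * y) 0 - t * H x y 0| ≤ ε₃) :
    ∃ φ : ℝ → ℝ,
      (∀ x y : ℝ, 0 < x → 0 < y → φ (x * y) = x * φ y + y * φ x) ∧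
      (∀ x y z : ℝ, 0 < x → 0 < y → 0 < z →
        |H x y z - (φ (x + y + z) - φ x - φ y - φ z)| ≤ ε₁ + ε₂) := by
  obtain ⟨f, hf⟩ : ∃ f : ℝ → ℝ → ℝ, ∀ x y, f x y = H x y 0 := ⟨_, fun _ _ => rfl⟩
  simp only [← hf] at hhom heq
  have hom : ∀ t x y : ℝ, 0 < t → 0 < x → 0 < y → f (t * x) (t * y) = t * f x y := by
    intro t x y ht hx hy
    rw [← sub_eq_zero]
    apply ent_zero_of_bdd _ (2 * ε₃)
    intro s hs
    have h1 := hhom (s * t) x y (by positivity) hx hy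
    have h2 := hhom s (t * x) (t * y) hs (by positivity) (by positivity)
    rw [mul_assoc, mul_assoc] at h1
    have e : ∀ u : ℝ, s * |u| = |s * u| := fun u => by rw [abs_mul, abs_of_pos hs]
    rw [e]
    rw [abs_le] at *
    constructor <;> linarith
  have sy : ∀ x y : ℝ, 0 < x → 0 < y → f x y = f y x := by
    intro x y hx hy
    rw [← sub_eq_zero]
    apply ent_zero_of_bdd _ ε₁
    intro s hs
    have h1 := hsym (s * x) (s * y) 0 (by positivity) (by positivity) le_rfl (by positivity)
      (Equiv.swap 0 1)
    have e2 : (Equiv.swap (0 : Fin 3) 1) 2 = 2 := by decide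
    simp only [Equiv.swap_apply_left, Equiv.swap_apply_right, e2] at h1
    simp [← hf] at h1
    rw [hom s x y hs hx hy, hom s y x hs hy hx] at h1
    rwa [← mul_sub, abs_mul, abs_of_pos hs] at h1
  have main : ∀ x y z : ℝ, 0 < x → 0 < y → 0 < z →
      |H x y z - f (x + y) z - f x y| ≤ ε₁ + ε₂ := by
    intro x y z hx hy hz
    have h1 := heq x y z hx hy hz
    have h2 := hsym (x + y) 0 z (by positivity) le_rfl hz.le (by positivity) (Equiv.swap 1 2)
    have e2 : (Equiv.swap (1 : Fin 3) 2) 0 = 0 := by decide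
    simp only [Equiv.swap_apply_left, Equiv.swap_apply_right, e2] at h2
    simp [← hf] at h2
    rw [abs_le] at *
    constructor <;> linarith
  have as : ∀ x y z : ℝ, 0 < x → 0 < y → 0 < z →
      f x y + f (x + y) z = f y z + f x (y + z) := by
    intro x y z hx hy hz
    rw [← sub_eq_zero]
    apply ent_zero_of_bdd _ (2 * (ε₁ + ε₂) + ε₁)
    intro s hs
    have h1 := main (s * x) (s * y) (s * z) (by positivity) (by positivity) (by positivity)
    have h2 := main (s * y) (s * z) (s * x) (by positivity) (by positivity) (by positivity)
    have h3 := hsym (s * x) (s * y) (s * z) (by positivity) (by positivity) (by positivity)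
      (by positivity) (finRotate 3)
    have e0 : finRotate 3 0 = 1 := by decide
    have e1 : finRotate 3 1 = 2 := by decide
    have e2 : finRotate 3 2 = 0 := by decide
    simp only [e0, e1, e2] at h3
    simp at h3
    rw [← mul_add, hom s _ _ hs (by positivity) hz, hom s _ _ hs hx hy] at h1
    rw [← mul_add, hom s _ _ hs (by positivity) hx, hom s _ _ hs hy hz,
      sy (y + z) x (by positivity) hx] at h2
    have e : ∀ u : ℝ, s * |u| = |s * u| := fun u => by rw [abs_mul, abs_of_pos hs]
    rw [e]
    rw [abs_le] at *
    constructor <;> linarith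
  classical
  let c : EntCoc :=
    { f := fun x y => if x = 0 ∨ y = 0 then 0 else f x y
      zero := by intro x; simp
      symm := by
        intro x y
        by_cases hx : x = 0
        · simp [hx]
        by_cases hy : y = 0
        · simp [hy]
        simp [hx, hy]
        exact sy x y (by positivity) (by positivity)
      assoc := by
        intro x y z
        by_cases hx : x = 0
        · simp [hx]
        by_cases hy : y = 0
        · simp [hy]
        by_cases hz : z = 0
        · simp [hz]
        simp [hx, hy, hz]
        exact as x y z (by positivity) (by positivity) (by positivity)
      hom := by
        intro t x y
        by_cases ht : t = 0
        · simp [ht]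
        by_cases hx : x = 0
        · simp [hx]
        by_cases hy : y = 0
        · simp [hy]
        simp [ht, hx, hy]
        exact hom t x y (by positivity) (by positivity) (by positivity) }
  obtain ⟨ψ, hm, ha⟩ := ent_solve c
  have ha' : ∀ x y : ℝ, 0 < x → 0 < y →
      ψ (x + y).toNNReal = ψ x.toNNReal + ψ y.toNNReal + f x y := by
    intro x y hx hy
    rw [Real.toNNReal_add hx.le hy.le, ha]
    simp [c, hx.not_ge, hy.not_ge, hx.le, hy.le]
  refine ⟨fun x => ψ x.toNNReal, ?_, ?_⟩
  · intro x y hx hy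
    simp only
    rw [Real.toNNReal_mul hx.le, hm, Real.coe_toNNReal _ hx.le, Real.coe_toNNReal _ hy.le]
  · intro x y z hx hy hz
    have h1 := ha' x y hx hy
    have h2 := ha' (x + y) z (by positivity) hz
    have h3 := main x y z hx hy hz
    simp only
    rw [abs_le] at *
    constructor <;> linarith
end

section
/- Let ε₁, ε₂, ε₃ be nonnegative real numbers and let H : D → ℝ satisfy: (i) |H(x,y,z) − H(σ(x),σ(y),σ(z))| ≤ ε₁ for all (x,y,z) ∈ D and every permutation σ of the three coordinates; (ii) |H(x,y,z) − H(x+y,0,z) − H(x,y,0)| ≤ ε₂ for all (x,y,z) ∈ D°; (iii) |H(tx,ty,0) − H(x,y,0)| ≤ ε₃ for all t,x,y > 0 (approximate positive homogeneity of degree α = 0). Then there exists a constant a ∈ ℝ such that |H(x,y,z) − a| ≤ 8ε₃ + 25ε₂ + 49ε₁ for all (x,y,z) ∈ D°. -/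
/-- Hyers–Ulam stability of the entropy equation, case α = 0:
if `H` is approximately symmetric on `D`, approximately satisfies the entropy
equation on `D°` and is approximately positively homogeneous of degree 0, then
`H` is close to a constant on `D°`, with bound `8ε₃ + 25ε₂ + 49ε₁`. -/
theorem entropy_equation_stability_alpha_zero
    (ε₁ ε₂ ε₃ : ℝ) (hε₁ : 0 ≤ ε₁) (hε₂ : 0 ≤ ε₂) (hε₃ : 0 ≤ ε₃)
    (H : ℝ → ℝ → ℝ → ℝ)
    (hsym : ∀ x y z : ℝ, 0 ≤ x → 0 ≤ y → 0 ≤ z → 0 < x + y + z →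
      ∀ σ : Equiv.Perm (Fin 3),
        |H x y z - H (![x, y, z] (σ 0)) (![x, y, z] (σ 1)) (![x, y, z] (σ 2))| ≤ ε₁)
    (heq : ∀ x y z : ℝ, 0 < x → 0 < y → 0 < z →
      |H x y z - H (x + y) 0 z - H x y 0| ≤ ε₂)
    (hhom : ∀ t x y : ℝ, 0 < t → 0 < x → 0 < y →
      |H (t * x) (t * y) 0 - H x y 0| ≤ ε₃) :
    ∃ a : ℝ, ∀ x y z : ℝ, 0 < x → 0 < y → 0 < z →
      |H x y z - a| ≤ 8 * ε₃ + 25 * ε₂ + 49 * ε₁ := by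
  have sw : ∀ x y z : ℝ, 0 ≤ x → 0 ≤ y → 0 ≤ z → 0 < x + y + z →
      |H x y z - H x z y| ≤ ε₁ ∧ |H x y z - H y x z| ≤ ε₁ ∧ |H x y z - H z y x| ≤ ε₁ := by
    intro x y z hx hy hz h
    have h1 := hsym x y z hx hy hz h (Equiv.swap 1 2)
    have h2 := hsym x y z hx hy hz h (Equiv.swap 0 1)
    have h3 := hsym x y z hx hy hz h (Equiv.swap 0 2)
    have e1 : (Equiv.swap (1 : Fin 3) 2) 0 = 0 := by decide
    have e2 : (Equiv.swap (0 : Fin 3) 1) 2 = 2 := by decide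
    have e3 : (Equiv.swap (0 : Fin 3) 2) 1 = 1 := by decide
    simp only [Equiv.swap_apply_left, Equiv.swap_apply_right, e1, e2, e3] at h1 h2 h3
    exact ⟨by simpa using h1, by simpa using h2, by simpa using h3⟩
  have key : ∀ x y z : ℝ, 0 < x → 0 < y → 0 < z →
      |H x y z - H (x + y) z 0 - H x y 0| ≤ ε₂ + ε₁ := by
    intro x y z hx hy hz
    have h1 := abs_le.1 (heq x y z hx hy hz)
    have h2 := abs_le.1 (sw (x + y) 0 z (by linarith) le_rfl hz.le (by linarith)).1
    rw [abs_le]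
    constructor <;> linarith [h1.1, h1.2, h2.1, h2.2]
  have diag : ∀ x : ℝ, 0 < x → |H x x 0 - H 1 1 0| ≤ ε₃ := by
    intro x hx
    have := hhom x 1 1 hx one_pos one_pos
    simpa using this
  have main : ∀ x y : ℝ, 0 < x → 0 < y →
      |H x y 0 - H 1 1 0| ≤ 4 * ε₃ + 6 * ε₂ + 10 * ε₁ := by
    intro x y hx hy
    have a1 := abs_le.1 (key x x (2 * y) hx hx (by linarith))
    have a2 := abs_le.1 (key x (2 * y) x hx (by linarith) hx)
    have a3 := abs_le.1 (sw x x (2 * y) hx.le hx.le (by linarith) (by linarith)).1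
    have b1 := abs_le.1 (key y y x hy hy hx)
    have b2 := abs_le.1 (key x y y hx hy hy)
    have b3 := abs_le.1 (sw y y x hy.le hy.le hx.le (by linarith)).2.2
    have c1 := abs_le.1 (key (x + y) y x (by linarith) hy hx)
    have c2 := abs_le.1 (key x y (x + y) hx hy (by linarith))
    have c3 := abs_le.1 (sw (x + y) y x (by linarith) hy.le hx.le (by linarith)).2.2
    have d := abs_le.1 (sw x (2 * y) 0 hx.le (by linarith) le_rfl (by linarith)).2.1
    have e1 := abs_le.1 (diag x hx)
    have e2 := abs_le.1 (diag y hy)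
    have e3 := abs_le.1 (diag (x + y) (by linarith))
    have e4 := abs_le.1 (hhom 2 x y two_pos hx hy)
    rw [show x + x = 2 * x by ring] at a1
    rw [show y + y = 2 * y by ring] at b1
    rw [show x + y + y = x + 2 * y by ring] at c1
    rw [abs_le]
    constructor <;> linarith [a1.1, a1.2, a2.1, a2.2, a3.1, a3.2, b1.1, b1.2, b2.1, b2.2,
      b3.1, b3.2, c1.1, c1.2, c2.1, c2.2, c3.1, c3.2, d.1, d.2, e1.1, e1.2, e2.1, e2.2,
      e3.1, e3.2, e4.1, e4.2]
  refine ⟨2 * H 1 1 0, fun x y z hx hy hz => ?_⟩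
  have h1 := abs_le.1 (key x y z hx hy hz)
  have h2 := abs_le.1 (main (x + y) z (by linarith) hz)
  have h3 := abs_le.1 (main x y hx hy)
  rw [abs_le]
  constructor <;> linarith [h1.1, h1.2, h2.1, h2.2, h3.1, h3.2]
end

section
/- Let α ∈ ℝ with α ∉ {0,1}, let ε₁, ε₂, ε₃ be nonnegative real numbers and let H : D → ℝ satisfy: (i) |H(x,y,z) − H(σ(x),σ(y),σ(z))| ≤ ε₁ for all (x,y,z) ∈ D and every permutation σ of the three coordinates; (ii) |H(x,y,z) − H(x+y,0,z) − H(x,y,0)| ≤ ε₂ for all (x,y,z) ∈ D°; (iii) |H(tx,ty,0) − t^α·H(x,y,0)| ≤ ε₃ for all t,x,y > 0. Then there exists a constant c ∈ ℝ such that |H(x,y,z) − c·[(x+y+z)^α − x^α − y^α − z^α]| ≤ ε₁ + ε₂ for all (x,y,z) ∈ D°. -/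
theorem scale_zero (α : ℝ) (hα0 : α ≠ 0) (a C : ℝ)
    (h : ∀ t : ℝ, 0 < t → |t ^ α * a| ≤ C) : a = 0 := by
  by_contra ha
  have hC : 0 ≤ C := le_trans (abs_nonneg _) (h 1 one_pos)
  have hpos : 0 < |a| := abs_pos.mpr ha
  have hb : 0 < (C + 1) / |a| := by positivity
  have h1 := h (((C + 1) / |a|) ^ (α⁻¹)) (Real.rpow_pos_of_pos hb _)
  rw [← Real.rpow_mul hb.le, inv_mul_cancel₀ hα0, Real.rpow_one, abs_mul, abs_of_pos hb,
    div_mul_cancel₀ _ hpos.ne'] at h1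
  linarith

/-- Hyers–Ulam stability of the entropy equation, case α ∉ {0, 1}:
if `H` is approximately symmetric on `D`, approximately satisfies the entropy
equation on `D°` and is approximately positively homogeneous of degree α, then
`H` is close to `c·[(x+y+z)^α − x^α − y^α − z^α]` on `D°`. -/
theorem entropy_equation_stability_alpha_ne_zero_one
    (α : ℝ) (hα0 : α ≠ 0) (hα1 : α ≠ 1)
    (ε₁ ε₂ ε₃ : ℝ) (hε₁ : 0 ≤ ε₁) (hε₂ : 0 ≤ ε₂) (hε₃ : 0 ≤ ε₃)
    (H : ℝ → ℝ → ℝ → ℝ)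
    (hsym : ∀ x y z : ℝ, 0 ≤ x → 0 ≤ y → 0 ≤ z → 0 < x + y + z →
      ∀ σ : Equiv.Perm (Fin 3),
        |H x y z - H (![x, y, z] (σ 0)) (![x, y, z] (σ 1)) (![x, y, z] (σ 2))| ≤ ε₁)
    (heq : ∀ x y z : ℝ, 0 < x → 0 < y → 0 < z →
      |H x y z - H (x + y) 0 z - H x y 0| ≤ ε₂)
    (hhom : ∀ t x y : ℝ, 0 < t → 0 < x → 0 < y →
      |H (t * x) (t * y) 0 - t ^ α * H x y 0| ≤ ε₃) :
    ∃ c : ℝ, ∀ x y z : ℝ, 0 < x → 0 < y → 0 < z →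
      |H x y z - c * ((x + y + z) ^ α - x ^ α - y ^ α - z ^ α)| ≤ ε₁ + ε₂ := by
  have s01 : ∀ x y : ℝ, 0 < x → 0 < y → |H x y 0 - H y x 0| ≤ ε₁ := by
    intro x y hx hy
    have := hsym x y 0 hx.le hy.le le_rfl (by linarith) (Equiv.swap 0 1)
    simpa [Equiv.swap_apply_def] using this
  have s12 : ∀ x y : ℝ, 0 < x → 0 < y → |H x 0 y - H x y 0| ≤ ε₁ := by
    intro x y hx hy
    have := hsym x 0 y hx.le le_rfl hy.le (by linarith) (Equiv.swap 1 2)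
    simpa [Equiv.swap_apply_def] using this
  have srot : ∀ x y z : ℝ, 0 < x → 0 < y → 0 < z → |H x y z - H y z x| ≤ ε₁ := by
    intro x y z hx hy hz
    have := hsym x y z hx.le hy.le hz.le (by linarith) (finRotate 3)
    have e0 : finRotate 3 0 = 1 := by decide
    have e1 : finRotate 3 1 = 2 := by decide
    have e2 : finRotate 3 2 = 0 := by decide
    rw [e0, e1, e2] at this
    simpa using this
  have happ : ∀ x y z : ℝ, 0 < x → 0 < y → 0 < z →
      |H x y z - (H (x + y) z 0 + H x y 0)| ≤ ε₁ + ε₂ := by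
    intro x y z hx hy hz
    have a := abs_le.mp (heq x y z hx hy hz)
    have b := abs_le.mp (s12 (x + y) z (by linarith) hz)
    exact abs_le.mpr ⟨by linarith [a.1, b.1], by linarith [a.2, b.2]⟩
  have hom : ∀ t x y : ℝ, 0 < t → 0 < x → 0 < y → H (t * x) (t * y) 0 = t ^ α * H x y 0 := by
    intro t x y ht hx hy
    refine sub_eq_zero.mp (scale_zero α hα0 _ (2 * ε₃) fun s hs => ?_)
    have a := abs_le.mp (hhom s (t * x) (t * y) hs (by positivity) (by positivity))
    have b := abs_le.mp (hhom (s * t) x y (by positivity) hx hy)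
    rw [Real.mul_rpow hs.le ht.le, mul_assoc, mul_assoc, mul_assoc] at b
    rw [mul_sub]
    exact abs_le.mpr ⟨by linarith [a.2, b.1], by linarith [a.1, b.2]⟩
  have sym : ∀ x y : ℝ, 0 < x → 0 < y → H x y 0 = H y x 0 := by
    intro x y hx hy
    refine sub_eq_zero.mp (scale_zero α hα0 _ ε₁ fun s hs => ?_)
    rw [mul_sub, ← hom s x y hs hx hy, ← hom s y x hs hy hx]
    exact s01 _ _ (by positivity) (by positivity)
  have coc : ∀ x y z : ℝ, 0 < x → 0 < y → 0 < z →
      H (x + y) z 0 + H x y 0 = H (y + z) x 0 + H y z 0 := by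
    intro x y z hx hy hz
    refine sub_eq_zero.mp (scale_zero α hα0 _ (3 * ε₁ + 2 * ε₂) fun s hs => ?_)
    rw [mul_sub, mul_add, mul_add, ← hom s x y hs hx hy, ← hom s y z hs hy hz,
      ← hom s _ z hs (by positivity) hz, ← hom s _ x hs (by positivity) hx, mul_add, mul_add]
    have hx' : 0 < s * x := by positivity
    have hy' : 0 < s * y := by positivity
    have hz' : 0 < s * z := by positivity
    have a := abs_le.mp (happ _ _ _ hx' hy' hz')
    have b := abs_le.mp (happ _ _ _ hy' hz' hx')
    have c := abs_le.mp (srot _ _ _ hx' hy' hz')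
    exact abs_le.mpr ⟨by linarith [a.1, a.2, b.1, b.2, c.1, c.2],
      by linarith [a.1, a.2, b.1, b.2, c.1, c.2]⟩
  have two : (2 : ℝ) ^ α - 2 ≠ 0 := by
    intro h
    apply hα1
    have h2 : (2 : ℝ) ^ α = 2 ^ (1 : ℝ) := by rw [Real.rpow_one]; linarith
    exact (Real.rpow_right_inj (by norm_num) (by norm_num)).mp h2
  have diag : ∀ x : ℝ, 0 < x → H x x 0 = x ^ α * H 1 1 0 := by
    intro x hx
    simpa using hom x 1 1 hx one_pos one_pos
  have key : ∀ x y : ℝ, 0 < x → 0 < y →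
      H x y 0 = H 1 1 0 / (2 ^ α - 2) * ((x + y) ^ α - x ^ α - y ^ α) := by
    intro x y hx hy
    have hxy : 0 < x + y := by linarith
    have c1 := coc (x + x) y y (by linarith) hy hy
    have c2 := coc x x y hx hx hy
    have c3 := coc (x + y) x y hxy hx hy
    have e1 : x + y + x = x + x + y := by ring
    have s1 := sym (y + y) (x + x) (by linarith) (by linarith)
    have h2 := hom 2 x y two_pos hx hy
    rw [two_mul, two_mul] at h2
    have d1 := diag x hx
    have d2 := diag y hy
    have d3 := diag (x + y) hxy
    rw [e1] at c3
    field_simp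
    linarith
  refine ⟨H 1 1 0 / (2 ^ α - 2), fun x y z hx hy hz => ?_⟩
  have a := happ x y z hx hy hz
  rw [key x y hx hy, key (x + y) z (by linarith) hz] at a
  convert a using 3
  ring
end

section
/- Let α ∈ ℝ with α ≠ 1, and let H : D → ℝ be symmetric (invariant under every permutation of its three arguments), positively homogeneous of degree α (H(tx,ty,tz) = t^α·H(x,y,z) for all t > 0 and (x,y,z) ∈ D), and satisfy the entropy equation H(x,y,z) = H(x+y,0,z) + H(x,y,0) for all (x,y,z) ∈ D°. Then there exists a constant c ∈ ℝ such that H(x,y,z) = c·[(x+y+z)^α − x^α − y^α − z^α] for all (x,y,z) ∈ D°. -/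
/-- If `H` is symmetric on `D`, positively homogeneous of degree α ≠ 1 on `D` and
satisfies the entropy equation on `D°`, then
`H(x,y,z) = c·[(x+y+z)^α − x^α − y^α − z^α]` on `D°` for some constant `c`. -/
theorem entropy_equation_solution_alpha_ne_one
    (α : ℝ) (hα : α ≠ 1)
    (H : ℝ → ℝ → ℝ → ℝ)
    (hsym : ∀ x y z : ℝ, 0 ≤ x → 0 ≤ y → 0 ≤ z → 0 < x + y + z →
      ∀ σ : Equiv.Perm (Fin 3),
        H x y z = H (![x, y, z] (σ 0)) (![x, y, z] (σ 1)) (![x, y, z] (σ 2)))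
    (hhom : ∀ t : ℝ, 0 < t → ∀ x y z : ℝ, 0 ≤ x → 0 ≤ y → 0 ≤ z → 0 < x + y + z →
      H (t * x) (t * y) (t * z) = t ^ α * H x y z)
    (heq : ∀ x y z : ℝ, 0 < x → 0 < y → 0 < z →
      H x y z = H (x + y) 0 z + H x y 0) :
    ∃ c : ℝ, ∀ x y z : ℝ, 0 < x → 0 < y → 0 < z →
      H x y z = c * ((x + y + z) ^ α - x ^ α - y ^ α - z ^ α) := by
  have s12 : ∀ x y z : ℝ, 0 ≤ x → 0 ≤ y → 0 ≤ z → 0 < x + y + z → H x y z = H y x z := by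
    intro x y z hx hy hz h
    have := hsym x y z hx hy hz h (Equiv.swap 0 1)
    have e : (Equiv.swap (0 : Fin 3) 1) 2 = 2 := by decide
    simpa [e] using this
  have s23 : ∀ x y z : ℝ, 0 ≤ x → 0 ≤ y → 0 ≤ z → 0 < x + y + z → H x y z = H x z y := by
    intro x y z hx hy hz h
    have := hsym x y z hx hy hz h (Equiv.swap 1 2)
    have e : (Equiv.swap (1 : Fin 3) 2) 0 = 0 := by decide
    simpa [e] using this
  obtain ⟨F, hF⟩ : ∃ F : ℝ → ℝ → ℝ, ∀ x y, F x y = H x y 0 := ⟨fun x y => H x y 0, fun _ _ => rfl⟩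
  have Fs : ∀ x y : ℝ, 0 < x → 0 < y → F x y = F y x := by
    intro x y hx hy
    rw [hF, hF]
    exact s12 x y 0 hx.le hy.le le_rfl (by linarith)
  have Fh : ∀ t x y : ℝ, 0 < t → 0 < x → 0 < y → F (t * x) (t * y) = t ^ α * F x y := by
    intro t x y ht hx hy
    have := hhom t ht x y 0 hx.le hy.le le_rfl (by linarith)
    rw [hF, hF, ← this, mul_zero]
  have HF : ∀ x y z : ℝ, 0 < x → 0 < y → 0 < z → H x y z = F (x + y) z + F x y := by
    intro x y z hx hy hz
    rw [heq x y z hx hy hz, hF, hF,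
      s23 (x + y) 0 z (by linarith) le_rfl hz.le (by linarith)]
  have C : ∀ x y z : ℝ, 0 < x → 0 < y → 0 < z →
      F (x + y) z + F x y = F x (y + z) + F y z := by
    intro x y z hx hy hz
    rw [← HF x y z hx hy hz, Fs x (y + z) hx (by linarith), ← HF y z x hy hz hx,
      s12 x y z hx.le hy.le hz.le (by linarith), s23 y x z hy.le hx.le hz.le (by linarith)]
  have h2 : (2 : ℝ) ^ α - 2 ≠ 0 := by
    intro h
    apply hα
    have h' : (2 : ℝ) ^ α = 2 ^ (1 : ℝ) := by rw [Real.rpow_one]; linarith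
    exact (Real.rpow_right_inj (by norm_num) (by norm_num)).1 h'
  have D : ∀ x : ℝ, 0 < x → F x x = x ^ α * F 1 1 := by
    intro x hx
    simpa using Fh x 1 1 hx one_pos one_pos
  have key : ∀ x y : ℝ, 0 < x → 0 < y →
      F x y = F 1 1 / (2 ^ α - 2) * ((x + y) ^ α - x ^ α - y ^ α) := by
    intro x y hx hy
    have hxy : 0 < x + y := by linarith
    have c1 := C x x (2 * y) hx hx (by linarith)
    have c2 := C x y y hx hy hy
    have c3 := C x y (x + y) hx hy hxy
    have c4 := Fh 2 x y two_pos hx hy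
    have c5 := Fs (x + y) y hxy hy
    rw [show x + x = 2 * x by ring] at c1
    rw [show y + y = 2 * y by ring] at c2
    rw [show y + (x + y) = x + 2 * y by ring] at c3
    have d1 := D x hx
    have d2 := D y hy
    have d3 := D (x + y) hxy
    field_simp
    linarith
  refine ⟨F 1 1 / (2 ^ α - 2), fun x y z hx hy hz => ?_⟩
  rw [HF x y z hx hy hz, key _ _ (by linarith) hz, key x y hx hy]
  ring
end

section
/- Let H : D → ℝ be symmetric (invariant under every permutation of its three arguments), positively homogeneous of degree 1 (H(tx,ty,tz) = t·H(x,y,z) for all t > 0 and (x,y,z) ∈ D), satisfy H(x,y,z) = H(x+y,z,0) + H(x,y,0) for all (x,y,z) ∈ D, and suppose the map x ↦ H(1−x, x, 0) is Lebesgue measurable on the open interval (0,1). Then, and only then, H(x,y,z) = x·log x + y·log y + z·log z − (x+y+z)·log(x+y+z) for all (x,y,z) ∈ D, up to a constant multiple of the logarithm (i.e. with an arbitrary base for the logarithm), with the convention 0·log 0 = 0. -/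
open MeasureTheory Set in
lemma az_preimage_vol (c d : ℝ) (hc : 0 < c) (hd0 : 0 ≤ d) (hd : d ≤ 1) (B : Set ℝ) :
    volume {z : ℝ | z ∈ Ioo (1:ℝ) 2 ∧ c / (d + z) ∈ B} ≤ ENNReal.ofReal (9 / c) * volume B := by
  have hsub : {z : ℝ | z ∈ Ioo (1:ℝ) 2 ∧ c / (d + z) ∈ B} ⊆
      (fun w => c / w - d) '' (B ∩ Ici (c / 3)) := by
    rintro z ⟨⟨h1, h2⟩, hz⟩
    refine ⟨c / (d + z), ⟨hz, ?_⟩, ?_⟩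
    · simp only [mem_Ici]
      apply div_le_div_of_nonneg_left hc.le (by linarith) (by linarith)
    · have : d + z ≠ 0 := by linarith
      have := hc.ne'
      simp only
      field_simp
      ring
  have hL : LipschitzOnWith (Real.toNNReal (9 / c)) (fun w => c / w - d) (B ∩ Ici (c / 3)) := by
    apply LipschitzOnWith.of_dist_le_mul
    rintro u ⟨_, hu⟩ v ⟨_, hv⟩
    simp only [mem_Ici] at hu hv
    have hu0 : 0 < u := by linarith [div_pos hc (by norm_num : (0:ℝ) < 3)]
    have hv0 : 0 < v := by linarith [div_pos hc (by norm_num : (0:ℝ) < 3)]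
    rw [Real.coe_toNNReal _ (by positivity), Real.dist_eq, Real.dist_eq]
    have e : c / u - d - (c / v - d) = (c / (u * v)) * (v - u) := by field_simp; ring
    rw [e, abs_mul, abs_sub_comm v u, abs_of_pos (by positivity : 0 < c / (u*v))]
    refine mul_le_mul_of_nonneg_right ?_ (abs_nonneg _)
    rw [div_le_div_iff₀ (by positivity) hc]
    have : c / 3 * (c / 3) ≤ u * v := by gcongr
    nlinarith
  have h := hL.hausdorffMeasure_image_le (d := 1) (by norm_num)
  rw [hausdorffMeasure_real] at h
  calc _ ≤ _ := measure_mono hsub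
    _ ≤ _ := h
    _ ≤ _ := by
      rw [ENNReal.rpow_one]
      exact mul_le_mul' le_rfl (measure_mono inter_subset_left)

open MeasureTheory Set Filter Topology in
lemma az_bad (f : ℝ → ℝ) (hf : Measurable f) (e : ENNReal) (he : 0 < e) :
    ∃ N : ℕ, volume {w : ℝ | w ∈ Ioo (0:ℝ) 1 ∧ (N:ℝ) < |f w|} < e := by
  have h := tendsto_measure_iInter_atTop (μ := volume)
    (s := fun N : ℕ => {w : ℝ | w ∈ Ioo (0:ℝ) 1 ∧ (N:ℝ) < |f w|})
    (fun N => (measurableSet_Ioo.inter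
      (measurableSet_lt measurable_const hf.abs)).nullMeasurableSet)
    (by
      intro a b hab w hw
      refine ⟨hw.1, lt_of_le_of_lt ?_ hw.2⟩
      exact_mod_cast hab)
    ⟨0, ne_top_of_le_ne_top (by simp) (measure_mono (t := Ioo (0:ℝ) 1) (fun w hw => hw.1))⟩
  have hE : (⋂ N : ℕ, {w : ℝ | w ∈ Ioo (0:ℝ) 1 ∧ (N:ℝ) < |f w|}) = ∅ := by
    ext w
    simp only [mem_iInter, mem_empty_iff_false, iff_false, not_forall]
    obtain ⟨N, hN⟩ := exists_nat_ge |f w|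
    exact ⟨N, fun h => absurd h.2 (not_lt.2 hN)⟩
  rw [hE, measure_empty] at h
  exact (h.eventually (gt_mem_nhds he)).exists

open MeasureTheory Set in
lemma az_bdd (f : ℝ → ℝ) (hf : Measurable f) (F : ℝ → ℝ → ℝ)
    (hF : ∀ x y, F x y = (x + y) * f (y / (x + y)))
    (hs : ∀ x y, 0 < x → 0 < y → F x y = F y x)
    (hc : ∀ x y z, 0 < x → 0 < y → 0 < z → F (x + y) z + F x y = F x (y + z) + F y z)
    (m : ℝ) (hm : 0 < m) : ∃ C, ∀ p, m ≤ p → p ≤ 1 - m → |f p| ≤ C := by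
  obtain ⟨N, hN⟩ := az_bad f hf (ENNReal.ofReal (m / 27)) (by simp; positivity)
  set B := {w : ℝ | w ∈ Ioo (0:ℝ) 1 ∧ (N:ℝ) < |f w|} with hB
  refine ⟨9 * N, fun p hp1 hp2 => ?_⟩
  have hbd : ∀ c d : ℝ, m ≤ c → 0 ≤ d → d ≤ 1 →
      volume {z : ℝ | z ∈ Ioo (1:ℝ) 2 ∧ c / (d + z) ∈ B} < ENNReal.ofReal (1/3) := by
    intro c d hcm h0 h1
    have hcp : 0 < c := by linarith
    calc _ ≤ _ := az_preimage_vol c d hcp h0 h1 B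
      _ < ENNReal.ofReal (9 / c) * ENNReal.ofReal (m / 27) := by
        apply ENNReal.mul_lt_mul_right _ _ hN
        · simp; positivity
        · simp
      _ ≤ _ := by
        rw [← ENNReal.ofReal_mul (by positivity)]
        apply ENNReal.ofReal_le_ofReal
        rw [div_mul_div_comm, div_le_div_iff₀ (by positivity) (by norm_num)]
        nlinarith
  have hex : ∃ z ∈ Ioo (1:ℝ) 2, (1 - p) / (1 + z) ∉ B ∧ p / (p + z) ∉ B ∧ 1 / (1 + z) ∉ B := by
    by_contra hcon
    push Not at hcon
    have hsub : Ioo (1:ℝ) 2 ⊆ ({z : ℝ | z ∈ Ioo (1:ℝ) 2 ∧ (1-p) / (1 + z) ∈ B} ∪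
        {z : ℝ | z ∈ Ioo (1:ℝ) 2 ∧ p / (p + z) ∈ B}) ∪
        {z : ℝ | z ∈ Ioo (1:ℝ) 2 ∧ 1 / (1 + z) ∈ B} := by
      intro z hz
      by_cases h1 : (1 - p) / (1 + z) ∈ B
      · exact Or.inl (Or.inl ⟨hz, h1⟩)
      by_cases h2 : p / (p + z) ∈ B
      · exact Or.inl (Or.inr ⟨hz, h2⟩)
      exact Or.inr ⟨hz, hcon z hz h1 h2⟩
    have h := (measure_mono (μ := volume) hsub).trans ((measure_union_le _ _).trans
      (add_le_add_left (measure_union_le _ _) _))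
    have h2 := lt_of_le_of_lt h (ENNReal.add_lt_add (ENNReal.add_lt_add
      (hbd (1-p) 1 (by linarith) (by norm_num) (by norm_num))
      (hbd p p (by linarith) (by linarith) (by linarith)))
      (hbd 1 1 (by linarith) (by norm_num) (by norm_num)))
    rw [Real.volume_Ioo, ← ENNReal.ofReal_add (by norm_num) (by norm_num),
      ← ENNReal.ofReal_add (by norm_num) (by norm_num)] at h2
    norm_num at h2
  obtain ⟨z, ⟨hz1, hz2⟩, b1, b2, b3⟩ := hex
  have good : ∀ w, 0 < w → w < 1 → w ∉ B → |f w| ≤ N := by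
    intro w h0 h1 hw
    by_contra hh
    exact hw ⟨⟨h0, h1⟩, not_le.1 hh⟩
  have hp0 : 0 < p := by linarith
  have hq0 : 0 < 1 - p := by linarith
  have g1 := good _ (by positivity) (by rw [div_lt_one (by linarith)]; linarith) b1
  have g2 := good _ (by positivity) (by rw [div_lt_one (by linarith)]; linarith) b2
  have g3 := good _ (by positivity) (by rw [div_lt_one (by linarith)]; linarith) b3
  have key := hc (1 - p) p z hq0 hp0 (by linarith)
  have e0 : F (1 - p) p = f p := by rw [hF]; simp
  have e1 : F (1 - p) (p + z) = (1 + z) * f ((1 - p) / (1 + z)) := by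
    rw [hs _ _ hq0 (by linarith), hF]
    have : p + z + (1 - p) = 1 + z := by ring
    rw [this]
  have e2 : F p z = (p + z) * f (p / (p + z)) := by
    rw [hs _ _ hp0 (by linarith), hF, add_comm z p]
  have e3 : F (1 - p + p) z = (1 + z) * f (1 / (1 + z)) := by
    rw [hs _ _ (by linarith) (by linarith), hF]
    have : z + (1 - p + p) = 1 + z := by ring
    rw [this]; simp
  rw [e0, e1, e2, e3] at key
  have hN0 : (0:ℝ) ≤ N := by positivity
  have k1 : |(1 + z) * f ((1 - p) / (1 + z))| ≤ 3 * N := by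
    rw [abs_mul, abs_of_pos (by linarith)]; gcongr; linarith
  have k2 : |(p + z) * f (p / (p + z))| ≤ 3 * N := by
    rw [abs_mul, abs_of_pos (by linarith)]; gcongr; linarith
  have k3 : |(1 + z) * f (1 / (1 + z))| ≤ 3 * N := by
    rw [abs_mul, abs_of_pos (by linarith)]; gcongr; linarith
  rw [abs_le] at *
  constructor <;> linarith

lemma az_additive (a : ℝ → ℝ) (ha : ∀ x y, 0 < x → 0 < y → a (x + y) = a x + a y)
    (C : ℝ) (hC : ∀ x, 1 ≤ x → x ≤ 2 → |a x| ≤ C) : ∀ x, 0 < x → a x = x * a 1 := by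
  have hp : ∀ n : ℕ, ∀ x, 0 < x → a (x + n) = a x + n * a 1 := by
    intro n
    induction n with
    | zero => intro x _; simp
    | succ n ih =>
      intro x hx
      push_cast
      rw [← add_assoc, ha _ _ (by positivity) one_pos, ih x hx]; ring
  have hm : ∀ n : ℕ, ∀ x, 0 < x → a ((n + 1 : ℝ) * x) = (n + 1) * a x := by
    intro n
    induction n with
    | zero => intro x _; simp
    | succ n ih =>
      intro x hx
      push_cast
      rw [add_mul, ha _ _ (by positivity) (by positivity), ih x hx]; simp; ring
  have hb : ∀ x, 0 < x → |a x - x * a 1| ≤ C + 2 * |a 1| := by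
    intro x hx
    have h1 := Nat.floor_le hx.le
    have h2 := Nat.lt_floor_add_one x
    set n := ⌊x⌋₊
    have e1 := hp 1 x hx
    have e2 := hp n (x + 1 - n) (by linarith)
    rw [sub_add_cancel] at e2
    have hC' := hC (x + 1 - n) (by linarith) (by linarith)
    push_cast at e1
    have e3 : a x - x * a 1 = a (x + 1 - n) - (x + 1 - n) * a 1 := by linarith
    rw [e3]
    calc _ ≤ |a (x + 1 - n)| + |(x + 1 - n) * a 1| := abs_sub _ _
      _ ≤ _ := by
        rw [abs_mul, abs_of_pos (by linarith : 0 < x + 1 - n)]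
        gcongr
        linarith
  intro x hx
  by_contra hne
  have hpos : 0 < |a x - x * a 1| := abs_pos.2 (sub_ne_zero.2 hne)
  obtain ⟨n, hn⟩ := exists_nat_gt ((C + 2 * |a 1|) / |a x - x * a 1|)
  rw [div_lt_iff₀ hpos] at hn
  have h := hb ((n + 1 : ℝ) * x) (by positivity)
  rw [hm n x hx, mul_assoc, ← mul_sub, abs_mul, abs_of_pos (by positivity)] at h
  linarith

open MeasureTheory Set intervalIntegral in
lemma az_core (f : ℝ → ℝ) (hf : Measurable f) (F : ℝ → ℝ → ℝ)
    (hF : ∀ x y, F x y = (x + y) * f (y / (x + y)))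
    (hs : ∀ x y, 0 < x → 0 < y → F x y = F y x)
    (hc : ∀ x y z, 0 < x → 0 < y → 0 < z → F (x + y) z + F x y = F x (y + z) + F y z) :
    ∃ k, ∀ x y, 0 < x → 0 < y →
      F x y = k * (x * Real.log x + y * Real.log y - (x + y) * Real.log (x + y)) := by
  have hbd : ∀ a b : ℝ, 0 < a → a ≤ b → ∃ C, ∀ x y, a ≤ x → x ≤ b → a ≤ y → y ≤ b →
      |F x y| ≤ C := by
    intro a b ha hab
    have hb : 0 < b := by linarith
    obtain ⟨C, hC⟩ := az_bdd f hf F hF hs hc (a / (2 * b)) (by positivity)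
    refine ⟨(2 * b) * C, fun x y h1 h2 h3 h4 => ?_⟩
    have hx : 0 < x := by linarith
    have hy : 0 < y := by linarith
    rw [hF, abs_mul, abs_of_pos (by linarith)]
    have h := hC (y / (x + y)) (by gcongr; linarith) (by
      have : y / (x + y) = 1 - x / (x + y) := by field_simp; ring
      rw [this]
      gcongr; linarith)
    gcongr
    linarith
  have hFm1 : ∀ x, Measurable (fun y => F x y) := by
    intro x; simp only [hF]; fun_prop
  have hFm2 : ∀ y, Measurable (fun x => F x y) := by
    intro x; simp only [hF]; fun_prop
  have hii : ∀ (u : ℝ → ℝ), Measurable u → ∀ a b : ℝ, (∃ C, ∀ t ∈ uIcc a b, |u t| ≤ C) →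
      IntervalIntegrable u volume a b := by
    rintro u hu a b ⟨C, hC⟩
    rw [intervalIntegrable_iff]
    apply Measure.integrableOn_of_bounded (M := C) (by simp) hu.aestronglyMeasurable
    filter_upwards [ae_restrict_mem measurableSet_uIoc] with t ht
    exact hC t (uIoc_subset_uIcc ht)
  have hi1 : ∀ x a b, 0 < x → 0 < a → 0 < b →
      IntervalIntegrable (fun y => F x y) volume a b := by
    intro x a b hx ha hb
    apply hii _ (hFm1 x)
    obtain ⟨C, hC⟩ := hbd (min x (min a b)) (max x (max a b)) (by positivity)
      ((min_le_left _ _).trans (le_max_left _ _))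
    refine ⟨C, fun t ht => hC x t (min_le_left _ _) (le_max_left _ _)
      ((min_le_right _ _).trans ht.1) (ht.2.trans (le_max_right _ _))⟩
  have hi2 : ∀ y a b, 0 < y → 0 < a → 0 < b →
      IntervalIntegrable (fun x => F x y) volume a b := by
    intro x a b hx ha hb
    apply hii _ (hFm2 x)
    obtain ⟨C, hC⟩ := hbd (min x (min a b)) (max x (max a b)) (by positivity)
      ((min_le_left _ _).trans (le_max_left _ _))
    refine ⟨C, fun t ht => hC t x 
      ((min_le_right _ _).trans ht.1) (ht.2.trans (le_max_right _ _)) (min_le_left _ _) (le_max_left _ _)⟩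
  obtain ⟨g, hg⟩ : ∃ g : ℝ → ℝ, ∀ s, g s = (∫ z in (1:ℝ)..2, F s z) - ∫ t in (1:ℝ)..(s+1), F t 1 :=
    ⟨_, fun s => rfl⟩
  have hFg : ∀ x y, 0 < x → 0 < y → F x y = g x + g y - g (x + y) := by
    intro x y hx hy
    have s1 : F x y = (∫ t in (y+1)..(y+2), F x t) + (∫ z in (1:ℝ)..2, F y z)
        - ∫ z in (1:ℝ)..2, F (x + y) z := by
      rw [← intervalIntegral.integral_comp_add_left (fun t => F x t) y]
      rw [← intervalIntegral.integral_add, ← intervalIntegral.integral_sub]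
      · have : ∫ z in (1:ℝ)..2, F x y = F x y := by simp; norm_num
        rw [← this]
        apply intervalIntegral.integral_congr
        intro z hz
        rw [uIcc_of_le (by norm_num)] at hz
        have := hc x y z hx hy (by linarith [hz.1])
        simp only
        linarith
      · apply IntervalIntegrable.add
        · have := (hi1 x (y+1) (y+2) hx (by linarith) (by linarith)).comp_add_left y
          simpa using this
        · exact hi1 y 1 2 hy one_pos two_pos
      · exact hi1 (x+y) 1 2 (by linarith) one_pos two_pos
      · have := (hi1 x (y+1) (y+2) hx (by linarith) (by linarith)).comp_add_left y
        simpa using this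
      · exact hi1 y 1 2 hy one_pos two_pos
    have s2 : (∫ t in (y+1)..(y+2), F x t) - (∫ t in (1:ℝ)..2, F x t)
        = (∫ t in (2:ℝ)..(y+2), F x t) - (∫ t in (1:ℝ)..(y+1), F x t) := by
      have a1 := integral_add_adjacent_intervals
        (hi1 x 1 2 hx one_pos two_pos) (hi1 x 2 (y+2) hx two_pos (by linarith))
      have a2 := integral_add_adjacent_intervals
        (hi1 x 1 (y+1) hx one_pos (by linarith)) (hi1 x (y+1) (y+2) hx (by linarith) (by linarith))
      linarith
    have hsh : IntervalIntegrable (fun t => F x (t + 1)) volume 1 (y+1) := by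
      have := (hi1 x 2 (y+2) hx two_pos (by linarith)).comp_add_right 1
      convert this using 1 <;> ring
    have hsh2 : IntervalIntegrable (fun t => F (x + t) 1) volume 1 (y+1) := by
      have := (hi2 1 (x+1) (x+(y+1)) one_pos (by linarith) (by linarith)).comp_add_left x
      simpa using this
    have s3 : (∫ t in (2:ℝ)..(y+2), F x t) - (∫ t in (1:ℝ)..(y+1), F x t)
        = (∫ t in (x+1)..(x+(y+1)), F t 1) - (∫ t in (1:ℝ)..(y+1), F t 1) := by
      rw [← intervalIntegral.integral_comp_add_left (fun t => F t 1) x]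
      have : (∫ t in (2:ℝ)..(y+2), F x t) = ∫ t in (1:ℝ)..(y+1), F x (t+1) := by
        rw [intervalIntegral.integral_comp_add_right (fun t => F x t) 1]
        congr 1 <;> ring
      rw [this, ← intervalIntegral.integral_sub hsh
        (hi1 x 1 (y+1) hx one_pos (by linarith)), ← intervalIntegral.integral_sub hsh2
        (hi2 1 1 (y+1) one_pos one_pos (by linarith))]
      apply intervalIntegral.integral_congr
      intro t ht
      rw [uIcc_of_le (by linarith)] at ht
      have := hc x t 1 hx (by linarith [ht.1]) one_pos
      simp only
      linarith
    have s4 := integral_add_adjacent_intervals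
        (hi2 1 1 (x+1) one_pos one_pos (by linarith))
        (hi2 1 (x+1) (x+(y+1)) one_pos (by linarith) (by linarith))
    rw [hg, hg, hg, add_assoc x y 1]
    linarith
  have hgb : ∀ a b, 0 < a → a ≤ b → ∃ C, ∀ s, a ≤ s → s ≤ b → |g s| ≤ C := by
    intro a b ha hab
    obtain ⟨C1, hC1⟩ := hbd (min a 1) (max b 2) (by positivity)
      ((min_le_left _ _).trans (hab.trans (le_max_left _ _)))
    obtain ⟨C2, hC2⟩ := hbd 1 (b+1) one_pos (by linarith)
    have hC20 : 0 ≤ C2 := (abs_nonneg _).trans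
      (hC2 1 1 le_rfl (by linarith) le_rfl (by linarith))
    refine ⟨C1 * |2 - 1| + C2 * b, fun s h1 h2 => ?_⟩
    rw [hg]
    refine (abs_sub _ _).trans (add_le_add ?_ ?_)
    · rw [← Real.norm_eq_abs]; apply intervalIntegral.norm_integral_le_of_norm_le_const
      intro z hz
      rw [uIoc_of_le (by norm_num)] at hz
      exact hC1 s z ((min_le_left _ _).trans h1) (h2.trans (le_max_left _ _))
        ((min_le_right _ _).trans hz.1.le) (hz.2.trans (le_max_right _ _))
    · have : |∫ t in (1:ℝ)..(s+1), F t 1| ≤ C2 * |s + 1 - 1| := by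
        rw [← Real.norm_eq_abs]; apply intervalIntegral.norm_integral_le_of_norm_le_const
        intro z hz
        rw [uIoc_of_le (by linarith)] at hz
        exact hC2 z 1 hz.1.le (by linarith [hz.2]) le_rfl (by linarith)
      refine this.trans ?_
      rw [add_sub_cancel_right, abs_of_pos (by linarith)]
      gcongr
  have hom : ∀ t x y, 0 < t → F (t * x) (t * y) = t * F x y := by
    intro t x y ht
    rw [hF, hF, ← mul_add, mul_div_mul_left _ _ ht.ne', mul_assoc]
  have hmul : ∀ t x, 0 < t → 0 < x → g (t * x) - t * g x = x * (g t - t * g 1) := by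
    intro t x ht hx
    obtain ⟨C1, hC1⟩ := hgb t (2 * t) ht (by linarith)
    obtain ⟨C2, hC2⟩ := hgb 1 2 one_pos (by norm_num)
    have := az_additive (fun x => g (t * x) - t * g x) (by
      intro x y hx hy
      have h1 := hFg x y hx hy
      have h2 := hFg (t * x) (t * y) (by positivity) (by positivity)
      rw [hom t x y ht, ← mul_add, h1] at h2
      linarith) (C1 + t * C2) (by
      intro x h1 h2
      refine (abs_sub _ _).trans (add_le_add (hC1 _ (by nlinarith) (by nlinarith)) ?_)
      rw [abs_mul, abs_of_pos ht]
      gcongr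
      exact hC2 x h1 h2) x hx
    simpa using this
  obtain ⟨l, hl⟩ : ∃ l : ℝ → ℝ, ∀ u, l u = g (Real.exp u) / Real.exp u - g 1 := ⟨_, fun _ => rfl⟩
  have hladd : ∀ u v, l (u + v) = l u + l v := by
    intro u v
    have h := hmul (Real.exp u) (Real.exp v) (Real.exp_pos _) (Real.exp_pos _)
    have hu := Real.exp_pos u
    have hv := Real.exp_pos v
    rw [hl, hl, hl, Real.exp_add]
    field_simp
    linarith
  obtain ⟨C, hC⟩ := hgb (Real.exp 1) (Real.exp 2) (Real.exp_pos _) (by simp)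
  have hlin : ∀ u, 0 < u → l u = u * l 1 := by
    apply az_additive l (fun u v _ _ => hladd u v) (C + |g 1|)
    intro u h1 h2
    rw [hl]
    refine (abs_sub _ _).trans (add_le_add ?_ le_rfl)
    rw [abs_div, abs_of_pos (Real.exp_pos u)]
    refine (div_le_self (abs_nonneg _) (by rw [Real.one_le_exp_iff]; linarith)).trans ?_
    exact hC _ (by simpa using h1) (by simpa using h2)
  have hlin' : ∀ u, l u = u * l 1 := by
    intro u
    have h0 : l 0 = 0 := by have := hladd 0 0; simp at this; exact this
    rcases lt_trichotomy u 0 with h | h | h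
    · have h1 := hlin (-u) (by linarith)
      have h2 := hladd u (-u)
      rw [add_neg_cancel, h0] at h2
      linarith
    · rw [h, h0]; simp
    · exact hlin u h
  have hgf : ∀ x, 0 < x → g x = x * (Real.log x * l 1 + g 1) := by
    intro x hx
    have h1 := hlin' (Real.log x)
    have h2 := hl (Real.log x)
    rw [Real.exp_log hx] at h2
    rw [← h1, h2]
    field_simp
    ring
  refine ⟨l 1, fun x y hx hy => ?_⟩
  rw [hFg x y hx hy, hgf x hx, hgf y hy, hgf (x + y) (by linarith)]
  ring

/-- Aczél's theorem: a function `H` on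
`D = {(x,y,z) : x ≥ 0, y ≥ 0, z ≥ 0, x+y+z > 0}` is symmetric, positively
homogeneous of degree 1, satisfies `H(x,y,z) = H(x+y,z,0) + H(x,y,0)` on `D`
(wherever all arguments lie in `D`, i.e. when moreover `x + y > 0`), and
`x ↦ H(1−x, x, 0)` is Lebesgue measurable on `(0,1)`, if and only if
`H(x,y,z) = k·[x·ln x + y·ln y + z·ln z − (x+y+z)·ln(x+y+z)]` on `D` for some
constant `k` (with the convention `0·ln 0 = 0`, automatic since `Real.log 0 = 0`). -/
theorem aczel_entropy_characterization (H : ℝ → ℝ → ℝ → ℝ) :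
    ((∀ x y z : ℝ, 0 ≤ x → 0 ≤ y → 0 ≤ z → 0 < x + y + z →
        ∀ σ : Equiv.Perm (Fin 3),
          H x y z = H (![x, y, z] (σ 0)) (![x, y, z] (σ 1)) (![x, y, z] (σ 2))) ∧
      (∀ t : ℝ, 0 < t → ∀ x y z : ℝ, 0 ≤ x → 0 ≤ y → 0 ≤ z → 0 < x + y + z →
        H (t * x) (t * y) (t * z) = t * H x y z) ∧
      (∀ x y z : ℝ, 0 ≤ x → 0 ≤ y → 0 ≤ z → 0 < x + y + z → 0 < x + y →
        H x y z = H (x + y) z 0 + H x y 0) ∧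
      Measurable ((Set.Ioo (0 : ℝ) 1).restrict fun x => H (1 - x) x 0)) ↔
    (∃ k : ℝ, ∀ x y z : ℝ, 0 ≤ x → 0 ≤ y → 0 ≤ z → 0 < x + y + z →
      H x y z = k * (x * Real.log x + y * Real.log y + z * Real.log z -
        (x + y + z) * Real.log (x + y + z))) := by
  constructor
  · rintro ⟨hsym, hhom, heq, hmeas⟩
    have hswap : ∀ x y, 0 ≤ x → 0 ≤ y → 0 < x + y → H x y 0 = H y x 0 := by
      intro x y hx hy hxy
      have := hsym x y 0 hx hy le_rfl (by linarith) (Equiv.swap 0 1)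
      simpa [Equiv.swap_apply_of_ne_of_ne] using this
    have hrot : ∀ x y z, 0 ≤ x → 0 ≤ y → 0 ≤ z → 0 < x + y + z → H x y z = H y z x := by
      intro x y z hx hy hz hxy
      have := hsym x y z hx hy hz hxy (finRotate 3)
      simpa using this
    have hx00 : ∀ x, 0 < x → H x 0 0 = 0 := by
      intro x hx
      have := heq x 0 0 hx.le le_rfl le_rfl (by linarith) (by linarith)
      simp at this
      exact this
    obtain ⟨f, hf, hfe⟩ : ∃ f : ℝ → ℝ, Measurable f ∧
        ∀ x, 0 < x → x < 1 → f x = H (1 - x) x 0 := by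
      obtain ⟨f, hf, h⟩ := (MeasurableEmbedding.subtype_coe
        (measurableSet_Ioo (a := (0:ℝ)) (b := 1))).exists_measurable_extend hmeas
          (fun _ => ⟨0⟩)
      exact ⟨f, hf, fun x h0 h1 => congrFun h ⟨x, h0, h1⟩⟩
    have hF : ∀ x y, 0 < x → 0 < y → (x + y) * f (y / (x + y)) = H x y 0 := by
      intro x y hx hy
      have hxy : 0 < x + y := by linarith
      have h1 : y / (x + y) < 1 := by rw [div_lt_one hxy]; linarith
      have h0 : 0 < y / (x + y) := by positivity
      rw [hfe _ h0 h1, ← hhom _ hxy _ _ _ (by linarith) h0.le le_rfl (by linarith)]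
      congr 1
      · field_simp
        ring
      · field_simp
      · simp
    obtain ⟨k, hk⟩ := az_core f hf (fun x y => (x + y) * f (y / (x + y))) (fun _ _ => rfl)
      (by
        intro x y hx hy
        rw [hF x y hx hy, hF y x hy hx]
        exact hswap x y hx.le hy.le (by linarith))
      (by
        intro x y z hx hy hz
        rw [hF _ z (by linarith) hz, hF x y hx hy, hF x _ hx (by linarith), hF y z hy hz,
          ← heq x y z hx.le hy.le hz.le (by linarith) (by linarith),
          hrot x y z hx.le hy.le hz.le (by linarith),
          heq y z x hy.le hz.le hx.le (by linarith) (by linarith),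
          hswap (y + z) x (by linarith) hx.le (by linarith)])
    have hE : ∀ x y, 0 ≤ x → 0 ≤ y → 0 < x + y →
        H x y 0 = k * (x * Real.log x + y * Real.log y - (x + y) * Real.log (x + y)) := by
      intro x y hx hy hxy
      rcases hx.eq_or_lt with rfl | hx'
      · rw [hswap _ _ hx hy hxy, hx00 y (by linarith)]; simp
      rcases hy.eq_or_lt with rfl | hy'
      · rw [hx00 x hx']; simp
      rw [← hF x y hx' hy']
      exact hk x y hx' hy'
    refine ⟨k, fun x y z hx hy hz hxyz => ?_⟩
    rcases (add_nonneg hx hy).eq_or_lt with h | h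
    · have h1 : x = 0 := by linarith
      have h2 : y = 0 := by linarith
      subst h1 h2
      rw [hrot _ _ _ hx hy hz hxyz, hrot _ _ _ hy hz hx (by linarith), hx00 z (by linarith)]
      simp
    · rw [heq x y z hx hy hz hxyz h, hE _ z h.le hz hxyz, hE x y hx hy h]
      ring
  · rintro ⟨k, hk⟩
    refine ⟨?_, ?_, ?_, ?_⟩
    · intro x y z hx hy hz hxyz σ
      have hnn : ∀ i, 0 ≤ ![x, y, z] i := by
        intro i; fin_cases i <;> simpa
      have e1 : ∀ φ : ℝ → ℝ, φ (![x, y, z] (σ 0)) + φ (![x, y, z] (σ 1)) + φ (![x, y, z] (σ 2))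
          = φ x + φ y + φ z := by
        intro φ
        have := Equiv.sum_comp σ (fun i => φ (![x, y, z] i))
        simpa [Fin.sum_univ_three] using this
      have e2 := e1 id
      have e3 := e1 (fun t => t * Real.log t)
      simp only [id] at e2 e3
      rw [hk x y z hx hy hz hxyz, hk _ _ _ (hnn _) (hnn _) (hnn _) (by rw [e2]; exact hxyz), e2, e3]
    · intro t ht x y z hx hy hz hxyz
      have hlog : ∀ u, t * u * Real.log (t * u) = t * u * Real.log t + t * (u * Real.log u) := by
        intro u
        rcases eq_or_ne u 0 with rfl | hu
        · simp
        · rw [Real.log_mul ht.ne' hu]; ring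
      rw [hk _ _ _ (by positivity) (by positivity) (by positivity)
        (by rw [← mul_add, ← mul_add]; positivity), hk x y z hx hy hz hxyz,
        ← mul_add, ← mul_add, hlog, hlog, hlog, hlog]
      ring
    · intro x y z hx hy hz hxyz hxy
      rw [hk x y z hx hy hz hxyz, hk _ z 0 hxy.le hz le_rfl (by linarith),
        hk x y 0 hx hy le_rfl (by linarith)]
      simp
      ring
    · have : ((Set.Ioo (0 : ℝ) 1).restrict fun x => H (1 - x) x 0) =
          fun x : Set.Ioo (0:ℝ) 1 => k * ((1 - (x:ℝ)) * Real.log (1 - x) + x * Real.log x) := by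
        funext x
        have h0 := x.2.1
        have h1 := x.2.2
        change H (1 - (x:ℝ)) x 0 = _
        rw [hk _ _ _ (by linarith) h0.le le_rfl (by linarith)]
        simp
      rw [this]
      fun_prop
end

section
/- Let S be a commutative semigroup (written additively), let ε ≥ 0, and let F : S × S → ℝ be a function such that |F(x,y) + F(x+y,z) − F(x,y+z) − F(y,z)| ≤ ε for all x,y,z ∈ S. Then there exists a function Ψ : S × S → ℝ satisfying the cocycle equation Ψ(x,y) + Ψ(x+y,z) = Ψ(x,y+z) + Ψ(y,z) for all x,y,z ∈ S, such that |F(x,y) − Ψ(x,y)| ≤ ε for all x,y ∈ S. -/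
structure IsMeanCS {S : Type*} (m : (S → ℝ) → ℝ) : Prop where
  bd : ∀ f c, (∀ w, |f w| ≤ c) → |m f| ≤ c
  add : ∀ f g c d, (∀ w, |f w| ≤ c) → (∀ w, |g w| ≤ d) → m (fun w => f w + g w) = m f + m g
  const : ∀ c : ℝ, m (fun _ => c) = c

lemma mean_ulim {S ι : Type*} (U : Ultrafilter ι) (ms : ι → (S → ℝ) → ℝ)
    (h : ∀ i, IsMeanCS (ms i)) :
    ∃ m : (S → ℝ) → ℝ, IsMeanCS m ∧ ∀ f c, (∀ w, |f w| ≤ c) →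
      Filter.Tendsto (fun i => ms i f) U (nhds (m f)) := by
  have key : ∀ f : S → ℝ, ∃ a : ℝ, ∀ c, (∀ w, |f w| ≤ c) →
      Filter.Tendsto (fun i => ms i f) U (nhds a) := by
    intro f
    by_cases hf : ∃ c, ∀ w, |f w| ≤ c
    · obtain ⟨c, hc⟩ := hf
      obtain ⟨a, -, ha⟩ := (isCompact_Icc (a := -c) (b := c)).ultrafilter_le_nhds
        (U.map (fun i => ms i f)) (by
          rw [Filter.le_principal_iff]
          exact Filter.mem_map.mpr (Filter.univ_mem' (fun i => abs_le.mp ((h i).bd f c hc))))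
      exact ⟨a, fun _ _ => ha⟩
    · exact ⟨0, fun c hc => (hf ⟨c, hc⟩).elim⟩
  choose m hm using key
  refine ⟨m, ⟨?_, ?_, ?_⟩, hm⟩
  · intro f c hc
    exact le_of_tendsto (hm f c hc).abs (Filter.Eventually.of_forall fun i => (h i).bd f c hc)
  · intro f g c d hc hd
    have h1 := hm (fun w => f w + g w) (c + d)
      (fun w => (abs_add_le _ _).trans (add_le_add (hc w) (hd w)))
    have h2 := (hm f c hc).add (hm g d hd)
    refine tendsto_nhds_unique h1 (h2.congr fun i => ?_)
    exact ((h i).add f g c d hc hd).symm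
  · intro c
    have h1 := hm (fun _ => c) |c| (fun _ => le_rfl)
    refine tendsto_nhds_unique h1 (tendsto_const_nhds.congr fun i => ?_)
    exact ((h i).const c).symm

lemma mean_step {S : Type*} [AddCommSemigroup S] (m : (S → ℝ) → ℝ) (hm : IsMeanCS m) (z : S) :
    ∃ m' : (S → ℝ) → ℝ, IsMeanCS m' ∧
      (∀ f c, (∀ w, |f w| ≤ c) → m' (fun w => f (w + z)) = m' f) ∧
      ∀ t, (∀ f c, (∀ w, |f w| ≤ c) → m (fun w => f (w + t)) = m f) →
        ∀ f c, (∀ w, |f w| ≤ c) → m' (fun w => f (w + t)) = m' f := by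
  have hpos : ∀ N : ℕ, (0 : ℝ) < (N : ℝ) + 1 := fun N => by positivity
  let ms : ℕ → (S → ℝ) → ℝ := fun N f =>
    (∑ k ∈ Finset.range (N + 1), m (fun w => f ((fun v => v + z)^[k] w))) / ((N : ℝ) + 1)
  have hms : ∀ N, IsMeanCS (ms N) := by
    intro N
    refine ⟨?_, ?_, ?_⟩
    · intro f c hc
      simp only [ms]
      rw [abs_div, abs_of_pos (hpos N), div_le_iff₀ (hpos N)]
      refine (Finset.abs_sum_le_sum_abs _ _).trans ?_
      refine (Finset.sum_le_card_nsmul _ _ c (fun k _ => hm.bd _ c fun w => hc _)).trans ?_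
      simp [mul_comm]
    · intro f g c d hc hd
      simp only [ms]
      rw [← add_div, ← Finset.sum_add_distrib]
      congr 1
      exact Finset.sum_congr rfl fun k _ => hm.add _ _ c d (fun w => hc _) (fun w => hd _)
    · intro c
      simp only [ms, hm.const]
      have := (hpos N).ne'
      simp
      field_simp
  obtain ⟨m', hm', hl⟩ := mean_ulim (Filter.hyperfilter ℕ) ms hms
  refine ⟨m', hm', ?_, ?_⟩
  · intro f c hc
    have h1 := hl (fun w => f (w + z)) c (fun w => hc _)
    have h2 := hl f c hc
    have h3 := h1.sub h2
    have h4 : Filter.Tendsto (fun N : ℕ => 2 * c * (1 / ((N : ℝ) + 1)))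
        (Filter.hyperfilter ℕ) (nhds 0) := by
      have := (tendsto_one_div_add_atTop_nhds_zero_nat (𝕜 := ℝ)).const_mul (2 * c)
      rw [mul_zero] at this
      exact this.mono_left Nat.hyperfilter_le_atTop
    have h5 : Filter.Tendsto (fun N : ℕ => ms N (fun w => f (w + z)) - ms N f)
        (Filter.hyperfilter ℕ) (nhds 0) := by
      refine squeeze_zero_norm (fun N => ?_) h4
      have e : ms N (fun w => f (w + z)) - ms N f
          = (m (fun w => f ((fun v => v + z)^[N + 1] w)) - m f) / ((N : ℝ) + 1) := by
        simp only [ms]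
        rw [← sub_div, ← Finset.sum_sub_distrib]
        congr 1
        have := Finset.sum_range_sub (fun k => m (fun w => f ((fun v => v + z)^[k] w))) (N + 1)
        simp only [Function.iterate_succ_apply', Function.iterate_zero, id] at this ⊢
        exact this
      rw [e, Real.norm_eq_abs, abs_div, abs_of_pos (hpos N), mul_one_div]
      refine div_le_div_of_nonneg_right ?_ (hpos N).le
      have a1 := abs_le.mp (hm.bd (fun w => f ((fun v => v + z)^[N + 1] w)) c (fun w => hc _))
      have a2 := abs_le.mp (hm.bd f c hc)
      rw [abs_le]
      constructor <;> linarith [a1.1, a1.2, a2.1, a2.2]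
    linarith [tendsto_nhds_unique h3 h5]
  · intro t ht f c hc
    have h1 := hl (fun w => f (w + t)) c (fun w => hc _)
    refine tendsto_nhds_unique h1 ((hl f c hc).congr fun N => ?_)
    simp only [ms]
    congr 1
    refine Finset.sum_congr rfl fun k _ => ?_
    rw [← ht (fun w => f ((fun v => v + z)^[k] w)) c (fun w => hc _)]
    have : ∀ w, (fun v => v + z)^[k] (w + t) = (fun v => v + z)^[k] w + t := by
      intro w
      induction k with
      | zero => rfl
      | succ k ih =>
        rw [Function.iterate_succ_apply', Function.iterate_succ_apply', ih (by simp_all; lia)]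
        exact add_right_comm _ _ _
    simp only [this]

lemma mean_exists (S : Type*) [AddCommSemigroup S] [Nonempty S] :
    ∃ m : (S → ℝ) → ℝ, IsMeanCS m ∧
      ∀ z f c, (∀ w, |f w| ≤ c) → m (fun w => f (w + z)) = m f := by
  classical
  have hfin : ∀ T : Finset S, ∃ m : (S → ℝ) → ℝ, IsMeanCS m ∧
      ∀ z ∈ T, ∀ f c, (∀ w, |f w| ≤ c) → m (fun w => f (w + z)) = m f := by
    intro T
    induction T using Finset.induction_on with
    | empty =>
      obtain ⟨s⟩ := ‹Nonempty S›
      exact ⟨fun f => f s, ⟨fun f c h => h s, fun _ _ _ _ _ _ => rfl, fun _ => rfl⟩, by simp⟩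
    | insert z T _ ih =>
      obtain ⟨m, hm, hT⟩ := ih
      obtain ⟨m', hm', hz, ht⟩ := mean_step m hm z
      refine ⟨m', hm', fun t htm => ?_⟩
      rcases Finset.mem_insert.mp htm with rfl | h
      · exact hz
      · exact ht t (hT t h)
  choose ms hms hinv using hfin
  obtain ⟨m, hm, hl⟩ := mean_ulim (Ultrafilter.of (Filter.atTop : Filter (Finset S))) ms hms
  refine ⟨m, hm, fun z f c hc => ?_⟩
  have h1 := hl (fun w => f (w + z)) c (fun w => hc _)
  refine tendsto_nhds_unique h1 ((hl f c hc).congr' ?_)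
  refine Filter.Eventually.filter_mono (Ultrafilter.of_le _) ?_
  filter_upwards [Filter.eventually_ge_atTop ({z} : Finset S)] with T hT
  exact (hinv T z (hT (by simp)) f c hc).symm

/-- Székelyhidi's stability theorem for the cocycle equation, specialized to
commutative semigroups (which are amenable) and real-valued functions:
an approximate cocycle is uniformly close (with the same bound) to an exact
solution of the cocycle equation. -/
theorem cocycle_equation_stability
    {S : Type*} [AddCommSemigroup S] (ε : ℝ) (hε : 0 ≤ ε)
    (F : S → S → ℝ)
    (hF : ∀ x y z : S, |F x y + F (x + y) z - F x (y + z) - F y z| ≤ ε) :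
    ∃ Ψ : S → S → ℝ,
      (∀ x y z : S, Ψ x y + Ψ (x + y) z = Ψ x (y + z) + Ψ y z) ∧
      (∀ x y : S, |F x y - Ψ x y| ≤ ε) := by
  rcases isEmpty_or_nonempty S with hS | hS
  · exact ⟨F, fun x => hS.elim x, fun x => hS.elim x⟩
  obtain ⟨m, hm, hinv⟩ := mean_exists S
  let C : S → S → S → ℝ := fun x y z => F x y + F (x + y) z - F x (y + z) - F y z
  have hC : ∀ x y z, |C x y z| ≤ ε := hF
  refine ⟨fun x y => F x y - m (C x y), ?_, ?_⟩
  · intro x y z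
    have b1 : ∀ w, |C y z w + C x (y + z) w| ≤ ε + ε := fun w =>
      (abs_add_le _ _).trans (add_le_add (hC _ _ _) (hC _ _ _))
    have e1 : m (fun w => (C y z w + C x (y + z) w) + C x y z)
        = m (C y z) + m (C x (y + z)) + C x y z := by
      rw [hm.add (fun w => C y z w + C x (y + z) w) (fun _ => C x y z) _ _ b1
        (fun _ => hC x y z), hm.const, hm.add _ _ ε ε (hC _ _) (hC _ _)]
    have e2 : m (fun w => C (x + y) z w + C x y (w + z)) = m (C (x + y) z) + m (C x y) := by
      rw [hm.add (C (x + y) z) (fun w => C x y (w + z)) ε ε (hC _ _) (fun w => hC _ _ _),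
        hinv z (C x y) ε (hC _ _)]
    have e3 : (fun w => (C y z w + C x (y + z) w) + C x y z)
        = (fun w => C (x + y) z w + C x y (w + z)) := by
      funext w
      simp only [C, add_assoc, add_comm w z]
      ring
    rw [e3, e2] at e1
    have : C x y z = F x y + F (x + y) z - F x (y + z) - F y z := rfl
    simp only
    linarith
  · intro x y
    simpa using hm.bd (C x y) ε (hC x y)
end

section
/- Let G : ℝ₊₊ × ℝ₊₊ → ℝ satisfy the cocycle equation G(x,y) + G(x+y,z) = G(x,y+z) + G(y,z) for all x,y,z > 0. Then there exist a function f : ℝ₊₊ → ℝ and a function B : ℝ₊₊ × ℝ₊₊ → ℝ satisfying B(x+y,z) = B(x,z) + B(y,z) and B(x,y) + B(y,x) = 0 for all x,y,z > 0, such that G(x,y) = B(x,y) + f(x+y) − f(x) − f(y) for all x,y > 0. -/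
/-- Underlying set of the extension of the positive reals by the reals. -/
@[ext] structure HExt where
  x : ℝ
  pos : 0 < x
  a : ℝ

/-- The semigroup structure on the extension given by a symmetric cocycle. -/
@[reducible] def hextSemigroup (S : ℝ → ℝ → ℝ)
    (hS : ∀ x y z : ℝ, 0 < x → 0 < y → 0 < z →
      S x y + S (x + y) z = S x (y + z) + S y z)
    (hsymm : ∀ x y, S x y = S y x) : AddCommSemigroup HExt where
  add p q := ⟨p.x + q.x, add_pos p.pos q.pos, p.a + q.a + S p.x q.x⟩
  add_assoc p q r := by
    have := hS p.x q.x r.x p.pos q.pos r.pos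
    refine HExt.ext (add_assoc p.x q.x r.x) ?_
    change p.a + q.a + S p.x q.x + r.a + S (p.x + q.x) r.x =
      p.a + (q.a + r.a + S q.x r.x) + S p.x (q.x + r.x)
    linarith
  add_comm p q := by
    refine HExt.ext (add_comm p.x q.x) ?_
    change p.a + q.a + S p.x q.x = q.a + p.a + S q.x p.x
    rw [hsymm]; ring

theorem hosszu_symm (S : ℝ → ℝ → ℝ)
    (hS : ∀ x y z : ℝ, 0 < x → 0 < y → 0 < z →
      S x y + S (x + y) z = S x (y + z) + S y z)
    (hsymm : ∀ x y, S x y = S y x) :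
    ∃ f : ℝ → ℝ, ∀ x y : ℝ, 0 < x → 0 < y → S x y = f (x + y) - f x - f y := by
  letI : AddCommSemigroup HExt := hextSemigroup S hS hsymm
  have hadd : ∀ p q : HExt, p + q =
    ⟨p.x + q.x, add_pos p.pos q.pos, p.a + q.a + S p.x q.x⟩ := fun _ _ => rfl
  let γ : HExt → Algebra.GrothendieckAddGroup (WithZero HExt) :=
    fun p => Algebra.GrothendieckAddGroup.of (p : WithZero HExt)
  have γadd : ∀ p q, γ (p + q) = γ p + γ q := by
    intro p q
    simp only [γ, WithZero.coe_add, map_add]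
  have γinj : Function.Injective γ := by
    intro p q h
    obtain ⟨⟨c, hc⟩, h⟩ := (AddLocalization.addMonoidOf
      (⊤ : AddSubmonoid (WithZero HExt))).eq_iff_exists.1 h
    change c + (p : WithZero HExt) = c + (q : WithZero HExt) at h
    induction c with
    | zero => simpa using h
    | coe c =>
      rw [← WithZero.coe_add, ← WithZero.coe_add, WithZero.coe_inj, hadd, hadd] at h
      simp only [HExt.mk.injEq, add_right_inj] at h
      obtain ⟨h1, h2⟩ := h
      rw [h1] at h2
      exact HExt.ext h1 (by linarith)
  have key : ∀ x y a b c d (hx : 0 < x) (hy : 0 < y), a + b = c + d →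
      γ ⟨x, hx, a⟩ + γ ⟨y, hy, b⟩ = γ ⟨x, hx, c⟩ + γ ⟨y, hy, d⟩ := by
    intro x y a b c d hx hy h
    rw [← γadd, ← γadd, hadd, hadd]
    simp only [h]
  let ι : ℝ →+ Algebra.GrothendieckAddGroup (WithZero HExt) :=
    AddMonoidHom.mk' (fun a => γ ⟨1, one_pos, a⟩ - γ ⟨1, one_pos, 0⟩) (by
      intro a b
      have := key 1 1 (a + b) 0 a b one_pos one_pos (by ring)
      rw [sub_add_sub_comm, ← this]
      abel)
  have ιinj : Function.Injective ι := by
    intro a b h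
    change γ ⟨1, one_pos, a⟩ - γ ⟨1, one_pos, 0⟩ = γ ⟨1, one_pos, b⟩ - γ ⟨1, one_pos, 0⟩ at h
    have := γinj (sub_left_injective h)
    simpa using this
  obtain ⟨φ, hφ⟩ := (Module.Baer.of_divisible ℝ).extension_property_addMonoidHom ι ιinj
    (AddMonoidHom.id ℝ)
  have hφ' : ∀ a, φ (γ ⟨1, one_pos, a⟩) - φ (γ ⟨1, one_pos, 0⟩) = a := by
    intro a
    rw [← map_sub]
    exact DFunLike.congr_fun hφ a
  have hγ : ∀ x a (hx : 0 < x), φ (γ ⟨x, hx, a⟩) = φ (γ ⟨x, hx, 0⟩) + a := by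
    intro x a hx
    have := congrArg φ (key x 1 a 0 0 a hx one_pos (by ring))
    rw [map_add, map_add] at this
    linarith [hφ' a]
  refine ⟨fun x => if hx : 0 < x then -φ (γ ⟨x, hx, 0⟩) else 0, fun x y hx hy => ?_⟩
  have h := congrArg φ (γadd ⟨x, hx, 0⟩ ⟨y, hy, 0⟩)
  rw [hadd, map_add, hγ] at h
  simp only [hx, hy, add_pos hx hy, dif_pos]
  linarith


/-- Hosszú's theorem on the general solution of the cocycle equation,
specialized to the cancellative commutative semigroup `ℝ₊₊`:
every solution `G` of the cocycle equation has the form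
`G(x,y) = B(x,y) + f(x+y) − f(x) − f(y)` where `B` is additive in the first
variable and antisymmetric. -/
theorem hosszu_cocycle_solution
    (G : ℝ → ℝ → ℝ)
    (hG : ∀ x y z : ℝ, 0 < x → 0 < y → 0 < z →
      G x y + G (x + y) z = G x (y + z) + G y z) :
    ∃ f : ℝ → ℝ, ∃ B : ℝ → ℝ → ℝ,
      (∀ x y z : ℝ, 0 < x → 0 < y → 0 < z → B (x + y) z = B x z + B y z) ∧
      (∀ x y : ℝ, 0 < x → 0 < y → B x y + B y x = 0) ∧
      (∀ x y : ℝ, 0 < x → 0 < y → G x y = B x y + f (x + y) - f x - f y) := by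
  obtain ⟨f, hf⟩ := hosszu_symm (fun x y => (G x y + G y x) / 2) (by
    intro x y z hx hy hz
    have h1 := hG x y z hx hy hz
    have h2 := hG z y x hz hy hx
    rw [add_comm z y, add_comm y x] at h2
    linarith) (by intro x y; simp only [add_comm])
  refine ⟨f, fun x y => (G x y - G y x) / 2, ?_, ?_, ?_⟩
  · intro x y z hx hy hz
    have h1 := hG x y z hx hy hz
    have h2 := hG z x y hz hx hy
    have h3 := hG x z y hx hz hy
    rw [add_comm z x] at h2
    rw [add_comm z y] at h3
    simp only
    linarith
  · intro x y _ _
    ring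
  · intro x y hx hy
    have := hf x y hx hy
    simp only at this ⊢
    linarith
end

section
/- Let α ∈ ℝ with α ≠ 0, let ε₃ ≥ 0, and let H : D → ℝ satisfy |H(tx,ty,0) − t^α·H(x,y,0)| ≤ ε₃ for all t,x,y > 0. Then the map (x,y) ↦ H(x,y,0) is exactly positively homogeneous of degree α on ℝ₊₊², i.e. H(sx,sy,0) = s^α·H(x,y,0) for all s,x,y > 0. -/
/-- Approximate positive homogeneity of nonzero degree α implies exact
positive homogeneity of degree α for the map `(x,y) ↦ H(x,y,0)`. -/
theorem approx_homogeneous_implies_homogeneous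
    (α : ℝ) (hα : α ≠ 0) (ε₃ : ℝ) (hε₃ : 0 ≤ ε₃)
    (H : ℝ → ℝ → ℝ → ℝ)
    (hhom : ∀ t x y : ℝ, 0 < t → 0 < x → 0 < y →
      |H (t * x) (t * y) 0 - t ^ α * H x y 0| ≤ ε₃) :
    ∀ s x y : ℝ, 0 < s → 0 < x → 0 < y →
      H (s * x) (s * y) 0 = s ^ α * H x y 0 := by
  intro s x y hs hx hy
  by_contra hne
  have hd : 0 < |H (s * x) (s * y) 0 - s ^ α * H x y 0| :=
    abs_pos.mpr (sub_ne_zero.mpr hne)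
  set d := H (s * x) (s * y) 0 - s ^ α * H x y 0 with hdd
  have hu : 0 < (2 * ε₃ + 1) / |d| := by positivity
  obtain ⟨t, ht, htα⟩ : ∃ t : ℝ, 0 < t ∧ t ^ α = (2 * ε₃ + 1) / |d| :=
    ⟨((2 * ε₃ + 1) / |d|) ^ α⁻¹, Real.rpow_pos_of_pos hu _,
      Real.rpow_inv_rpow hu.le hα⟩
  have h1 := hhom t (s * x) (s * y) ht (mul_pos hs hx) (mul_pos hs hy)
  have h2 := hhom (t * s) x y (mul_pos ht hs) hx hy
  rw [Real.mul_rpow ht.le hs.le, mul_assoc t s x, mul_assoc t s y] at h2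
  have h3 : |t ^ α * d| ≤ 2 * ε₃ := by
    rw [abs_le] at *
    rw [hdd, mul_sub]
    constructor <;> linarith [h1.1, h1.2, h2.1, h2.2]
  rw [abs_mul, htα, abs_of_pos hu, div_mul_cancel₀ _ hd.ne'] at h3
  linarith
end

section
/- Let F : ℝ₊₊ × ℝ₊₊ → ℝ be symmetric (F(x,y) = F(y,x) for all x,y > 0), positively homogeneous of degree 1 (F(tx,ty) = t·F(x,y) for all t,x,y > 0), and satisfy the cocycle equation F(x,y) + F(x+y,z) = F(x,y+z) + F(y,z) for all x,y,z > 0. Then there exists a function φ : ℝ₊₊ → ℝ satisfying φ(xy) = x·φ(y) + y·φ(x) for all x,y > 0 such that F(x,y) = φ(x+y) − φ(x) − φ(y) for all x,y > 0. -/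
open scoped NNReal

namespace JKT

/-- Setoid of formal differences. -/
def dset (S : Type) [CommSemiring S] [IsCancelAdd S] : Setoid (S × S) where
  r a b := a.1 + b.2 = b.1 + a.2
  iseqv := by
    refine ⟨fun a => rfl, fun h => h.symm, ?_⟩
    intro a b c h1 h2
    apply add_right_cancel (b := b.2)
    calc a.1 + c.2 + b.2 = (a.1 + b.2) + c.2 := by ring
      _ = (b.1 + c.2) + a.2 := by rw [h1]; ring
      _ = c.1 + a.2 + b.2 := by rw [h2]; ring

/-- Ring of formal differences. -/
def Q (S : Type) [CommSemiring S] [IsCancelAdd S] : Type := Quotient (dset S)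

section
variable {S : Type} [CommSemiring S] [IsCancelAdd S]

/-- Class of a pair. -/
def mk (a b : S) : Q S := Quotient.mk (dset S) (a, b)

theorem mk_eq {a b c d : S} : mk a b = mk c d ↔ a + d = c + b := by
  constructor
  · intro h
    exact Quotient.exact h
  · intro h
    exact Quotient.sound h

theorem mk_surj (q : Q S) : ∃ a b, q = mk a b := by
  induction q using Quotient.inductionOn with
  | h p => exact ⟨p.1, p.2, rfl⟩

instance : Add (Q S) := ⟨Quotient.map₂ (fun p q => (p.1 + q.1, p.2 + q.2)) (by
  intro a a' h b b' h'
  change a.1 + a'.2 = a'.1 + a.2 at h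
  change b.1 + b'.2 = b'.1 + b.2 at h'
  change a.1 + b.1 + (a'.2 + b'.2) = a'.1 + b'.1 + (a.2 + b.2)
  calc _ = (a.1 + a'.2) + (b.1 + b'.2) := by ring
    _ = _ := by rw [h, h']; ring)⟩

instance : Mul (Q S) :=
  ⟨Quotient.map₂ (fun p q => (p.1 * q.1 + p.2 * q.2, p.1 * q.2 + p.2 * q.1)) (by
  intro a a' h b b' h'
  change a.1 + a'.2 = a'.1 + a.2 at h
  change b.1 + b'.2 = b'.1 + b.2 at h'
  change a.1 * b.1 + a.2 * b.2 + (a'.1 * b'.2 + a'.2 * b'.1)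
    = a'.1 * b'.1 + a'.2 * b'.2 + (a.1 * b.2 + a.2 * b.1)
  apply add_right_cancel (b := a'.2 * b.1 + a'.1 * b.2)
  calc _ = (a.1 + a'.2) * b.1 + (a'.1 + a.2) * b.2 + (a'.1 * b'.2 + a'.2 * b'.1) := by ring
    _ = (a'.1 + a.2) * b.1 + (a.1 + a'.2) * b.2 + (a'.1 * b'.2 + a'.2 * b'.1) := by rw [h]
    _ = a.2 * b.1 + a.1 * b.2 + a'.1 * (b.1 + b'.2) + a'.2 * (b'.1 + b.2) := by ring
    _ = a.2 * b.1 + a.1 * b.2 + a'.1 * (b'.1 + b.2) + a'.2 * (b.1 + b'.2) := by rw [h']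
    _ = _ := by ring)⟩

instance : Neg (Q S) := ⟨Quotient.map (fun p => (p.2, p.1)) (by
  intro a a' h
  change a.1 + a'.2 = a'.1 + a.2 at h
  change a.2 + a'.1 = a'.2 + a.1
  rw [add_comm, ← h, add_comm])⟩

instance : Zero (Q S) := ⟨mk 0 0⟩
instance : One (Q S) := ⟨mk 1 0⟩

theorem mk_add (a b c d : S) : mk a b + mk c d = mk (a + c) (b + d) := rfl
theorem mk_mul (a b c d : S) : mk a b * mk c d = mk (a * c + b * d) (a * d + b * c) := rfl
theorem mk_neg (a b : S) : - mk a b = mk b a := rfl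
theorem mk_zero : (0 : Q S) = mk 0 0 := rfl
theorem mk_one : (1 : Q S) = mk 1 0 := rfl

instance : CommRing (Q S) where
  add_assoc x y z := by
    obtain ⟨a, b, rfl⟩ := mk_surj x
    obtain ⟨c, d, rfl⟩ := mk_surj y
    obtain ⟨e, f, rfl⟩ := mk_surj z
    simp only [mk_add, mk_eq]; ring
  zero_add x := by
    obtain ⟨a, b, rfl⟩ := mk_surj x
    simp only [mk_add, mk_zero, mk_eq]; ring
  add_zero x := by
    obtain ⟨a, b, rfl⟩ := mk_surj x
    simp only [mk_add, mk_zero, mk_eq]; ring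
  add_comm x y := by
    obtain ⟨a, b, rfl⟩ := mk_surj x
    obtain ⟨c, d, rfl⟩ := mk_surj y
    simp only [mk_add, mk_eq]; ring
  neg_add_cancel x := by
    obtain ⟨a, b, rfl⟩ := mk_surj x
    simp only [mk_add, mk_neg, mk_zero, mk_eq]; ring
  mul_assoc x y z := by
    obtain ⟨a, b, rfl⟩ := mk_surj x
    obtain ⟨c, d, rfl⟩ := mk_surj y
    obtain ⟨e, f, rfl⟩ := mk_surj z
    simp only [mk_mul, mk_eq]; ring
  left_distrib x y z := by
    obtain ⟨a, b, rfl⟩ := mk_surj x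
    obtain ⟨c, d, rfl⟩ := mk_surj y
    obtain ⟨e, f, rfl⟩ := mk_surj z
    simp only [mk_add, mk_mul, mk_eq]; ring
  right_distrib x y z := by
    obtain ⟨a, b, rfl⟩ := mk_surj x
    obtain ⟨c, d, rfl⟩ := mk_surj y
    obtain ⟨e, f, rfl⟩ := mk_surj z
    simp only [mk_add, mk_mul, mk_eq]; ring
  mul_comm x y := by
    obtain ⟨a, b, rfl⟩ := mk_surj x
    obtain ⟨c, d, rfl⟩ := mk_surj y
    simp only [mk_mul, mk_eq]; ring
  one_mul x := by
    obtain ⟨a, b, rfl⟩ := mk_surj x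
    simp only [mk_mul, mk_one, mk_eq]; ring
  mul_one x := by
    obtain ⟨a, b, rfl⟩ := mk_surj x
    simp only [mk_mul, mk_one, mk_eq]; ring
  zero_mul x := by
    obtain ⟨a, b, rfl⟩ := mk_surj x
    simp only [mk_mul, mk_zero, mk_eq]; ring
  mul_zero x := by
    obtain ⟨a, b, rfl⟩ := mk_surj x
    simp only [mk_mul, mk_zero, mk_eq]; ring
  nsmul := nsmulRec
  zsmul := zsmulRec

/-- Extension of a semiring map to formal differences. -/
def ext (p : S →+* ℝ) : Q S →+* ℝ where
  toFun := Quotient.lift (fun a => p a.1 - p a.2) (by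
    intro a b h
    change a.1 + b.2 = b.1 + a.2 at h
    have := congrArg p h
    simp only [map_add] at this
    change p a.1 - p a.2 = p b.1 - p b.2
    linarith)
  map_one' := by change p 1 - p 0 = 1; simp
  map_zero' := by change p 0 - p 0 = 0; simp
  map_add' x y := by
    obtain ⟨a, b, rfl⟩ := mk_surj x
    obtain ⟨c, d, rfl⟩ := mk_surj y
    change p (a + c) - p (b + d) = (p a - p b) + (p c - p d)
    simp only [map_add]; ring
  map_mul' x y := by
    obtain ⟨a, b, rfl⟩ := mk_surj x
    obtain ⟨c, d, rfl⟩ := mk_surj y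
    change p (a * c + b * d) - p (a * d + b * c) = (p a - p b) * (p c - p d)
    simp only [map_add, map_mul]; ring

theorem ext_mk (p : S →+* ℝ) (a b : S) : ext p (mk a b) = p a - p b := rfl

theorem smoothReal : Algebra.FormallySmooth ℤ ℝ := by
  have h1 : Algebra.FormallySmooth ℤ ℚ :=
    Algebra.FormallySmooth.of_isLocalization (nonZeroDivisors ℤ)
  have h2 : Algebra.FormallySmooth ℚ ℝ := by
    obtain ⟨s, hs⟩ := exists_isTranscendenceBasis ℚ ℝ
    have := hs.isAlgebraic_field
    exact .of_algebraicIndependent_of_isSeparable hs.1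
  exact Algebra.FormallySmooth.comp ℤ ℚ ℝ

theorem section_exists (p : S →+* ℝ) (h1 : ∀ x : ℝ≥0, ∃ a, p a = x)
    (hk : ∀ a b, p a = p b → ∃ k, p k = 0 ∧ a = b + k)
    (hz : ∀ a b, p a = 0 → p b = 0 → a * b = 0) :
    ∃ σ : ℝ≥0 → S, (∀ x, p (σ x) = x) ∧ (∀ x y, σ (x + y) = σ x + σ y) ∧
      (∀ x y, σ (x * y) = σ x * σ y) := by
  have hker : ∀ q : Q S, ext p q = 0 → ∃ k, p k = 0 ∧ q = mk k 0 := by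
    intro q hq
    obtain ⟨a, b, rfl⟩ := mk_surj q
    rw [ext_mk] at hq
    obtain ⟨k, hk0, rfl⟩ := hk a b (by linarith)
    exact ⟨k, hk0, by rw [mk_eq]; ring⟩
  have hsurj : Function.Surjective (ext p) := by
    intro r
    obtain ⟨a, ha⟩ := h1 r.toNNReal
    obtain ⟨b, hb⟩ := h1 (-r).toNNReal
    refine ⟨mk a b, ?_⟩
    rw [ext_mk, ha, hb]
    simp only [Real.coe_toNNReal']
    rcases le_total r 0 with h | h
    · rw [max_eq_right h, max_eq_left (by linarith)]; ring
    · rw [max_eq_left h, max_eq_right (by linarith)]; ring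
  have hnil : IsNilpotent (RingHom.ker (ext p)) := by
    refine ⟨2, ?_⟩
    rw [pow_two, Ideal.zero_eq_bot, eq_bot_iff, Ideal.mul_le]
    intro r hr s hs
    obtain ⟨k, hk0, rfl⟩ := hker r hr
    obtain ⟨l, hl0, rfl⟩ := hker s hs
    rw [Ideal.mem_bot, mk_mul, mk_zero, hz k l hk0 hl0, mk_eq]
    ring
  have := smoothReal
  let s : ℝ →ₐ[ℤ] Q S := Algebra.FormallySmooth.liftOfSurjective (AlgHom.id ℤ ℝ)
    (ext p).toIntAlgHom hsurj hnil
  have hs : ∀ x, ext p (s x) = x := fun x =>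
    Algebra.FormallySmooth.liftOfSurjective_apply (AlgHom.id ℤ ℝ)
      (ext p).toIntAlgHom hsurj hnil x
  have key : ∀ x : ℝ≥0, ∃ a, s x = mk a 0 := by
    intro x
    obtain ⟨a, ha⟩ := h1 x
    obtain ⟨k, hk0, hk1⟩ := hker (s x - mk a 0) (by
      rw [map_sub, hs, ext_mk, ha]; simp)
    refine ⟨k + a, ?_⟩
    rw [sub_eq_iff_eq_add] at hk1
    rw [hk1, mk_add, mk_eq]; ring
  choose σ hσ using key
  refine ⟨σ, ?_, ?_, ?_⟩
  · intro x
    have := hs x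
    rw [hσ, ext_mk] at this
    simpa using this
  · intro x y
    have : mk (σ (x + y)) 0 = mk (σ x) 0 + mk (σ y) 0 := by
      rw [← hσ, ← hσ, ← hσ, NNReal.coe_add, map_add]
    rw [mk_add, mk_eq] at this
    simpa using this
  · intro x y
    have : mk (σ (x * y)) 0 = mk (σ x) 0 * mk (σ y) 0 := by
      rw [← hσ, ← hσ, ← hσ, NNReal.coe_mul, map_mul]
    rw [mk_mul, mk_eq] at this
    simpa using this

end

/-- Pairs. -/
@[ext] structure JK where
  x : ℝ≥0
  a : ℝ

/-- The twisted semiring structure. -/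
@[reducible] def jkSemiring (G : ℝ≥0 → ℝ≥0 → ℝ) (hs : ∀ x y, G x y = G y x)
    (h0 : ∀ y, G 0 y = 0) (hh : ∀ t x y, G (t * x) (t * y) = t * G x y)
    (hc : ∀ x y z, G x y + G (x + y) z = G x (y + z) + G y z) : CommSemiring JK where
  add u v := ⟨u.x + v.x, u.a + v.a + G u.x v.x⟩
  zero := ⟨0, 0⟩
  mul u v := ⟨u.x * v.x, u.x * v.a + v.x * u.a⟩
  one := ⟨1, 0⟩
  add_assoc u v w := JK.ext (add_assoc _ _ _) (by
    change u.a + v.a + G u.x v.x + w.a + G (u.x + v.x) w.x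
      = u.a + (v.a + w.a + G v.x w.x) + G u.x (v.x + w.x)
    linarith [hc u.x v.x w.x])
  add_comm u v := JK.ext (add_comm _ _) (by
    change u.a + v.a + G u.x v.x = v.a + u.a + G v.x u.x
    rw [hs]; ring)
  zero_add u := JK.ext (zero_add _) (by
    change 0 + u.a + G 0 u.x = u.a
    rw [h0]; ring)
  add_zero u := JK.ext (add_zero _) (by
    change u.a + 0 + G u.x 0 = u.a
    rw [hs, h0]; ring)
  mul_assoc u v w := JK.ext (mul_assoc _ _ _) (by
    change ((u.x * v.x : ℝ≥0) : ℝ) * w.a + w.x * (u.x * v.a + v.x * u.a)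
      = u.x * (v.x * w.a + w.x * v.a) + ((v.x * w.x : ℝ≥0) : ℝ) * u.a
    push_cast; ring)
  mul_comm u v := JK.ext (mul_comm _ _) (add_comm _ _)
  one_mul u := JK.ext (one_mul _) (by
    change ((1 : ℝ≥0) : ℝ) * u.a + u.x * 0 = u.a
    push_cast; ring)
  mul_one u := JK.ext (mul_one _) (by
    change u.x * 0 + ((1 : ℝ≥0) : ℝ) * u.a = u.a
    push_cast; ring)
  zero_mul u := JK.ext (zero_mul _) (by
    change ((0 : ℝ≥0) : ℝ) * u.a + u.x * 0 = 0
    push_cast; ring)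
  mul_zero u := JK.ext (mul_zero _) (by
    change u.x * 0 + ((0 : ℝ≥0) : ℝ) * u.a = 0
    push_cast; ring)
  left_distrib u v w := JK.ext (mul_add _ _ _) (by
    change u.x * (v.a + w.a + G v.x w.x) + ((v.x + w.x : ℝ≥0) : ℝ) * u.a
      = (u.x * v.a + v.x * u.a) + (u.x * w.a + w.x * u.a) + G (u.x * v.x) (u.x * w.x)
    rw [hh]; push_cast; ring)
  right_distrib v w u := JK.ext (add_mul _ _ _) (by
    change ((v.x + w.x : ℝ≥0) : ℝ) * u.a + u.x * (v.a + w.a + G v.x w.x)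
      = (v.x * u.a + u.x * v.a) + (w.x * u.a + u.x * w.a) + G (v.x * u.x) (w.x * u.x)
    rw [mul_comm v.x, mul_comm w.x, hh]; push_cast; ring)
  nsmul := @nsmulRec _ ⟨⟨0, 0⟩⟩ ⟨fun u v => ⟨u.x + v.x, u.a + v.a + G u.x v.x⟩⟩

theorem main (G : ℝ≥0 → ℝ≥0 → ℝ) (hs : ∀ x y, G x y = G y x)
    (h0 : ∀ y, G 0 y = 0) (hh : ∀ t x y, G (t * x) (t * y) = t * G x y)
    (hc : ∀ x y z, G x y + G (x + y) z = G x (y + z) + G y z) :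
    ∃ φ : ℝ≥0 → ℝ, (∀ x y, φ (x * y) = x * φ y + y * φ x) ∧
      (∀ x y, φ (x + y) = φ x + φ y + G x y) := by
  let := jkSemiring G hs h0 hh hc
  have addx : ∀ u v : JK, (u + v).x = u.x + v.x := fun _ _ => rfl
  have adda : ∀ u v : JK, (u + v).a = u.a + v.a + G u.x v.x := fun _ _ => rfl
  have mulx : ∀ u v : JK, (u * v).x = u.x * v.x := fun _ _ => rfl
  have mula : ∀ u v : JK, (u * v).a = u.x * v.a + v.x * u.a := fun _ _ => rfl
  have : IsLeftCancelAdd JK := ⟨by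
    intro a b c h
    have hx : b.x = c.x := by
      have := congrArg JK.x h
      simpa [addx] using this
    have ha := congrArg JK.a h
    simp only [adda, hx] at ha
    exact JK.ext hx (by linarith)⟩
  have : IsCancelAdd JK := AddCommMagma.IsLeftCancelAdd.toIsCancelAdd JK
  let p : JK →+* ℝ :=
    { toFun := fun u => u.x
      map_one' := NNReal.coe_one
      map_zero' := NNReal.coe_zero
      map_add' := fun u v => NNReal.coe_add u.x v.x
      map_mul' := fun u v => NNReal.coe_mul u.x v.x }
  have hp : ∀ u, p u = u.x := fun _ => rfl
  obtain ⟨σ, h1, h2, h3⟩ := section_exists p (fun x => ⟨⟨x, 0⟩, rfl⟩)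
    (by
      intro a b h
      have hx : a.x = b.x := NNReal.coe_injective h
      refine ⟨⟨0, a.a - b.a⟩, NNReal.coe_zero, JK.ext ?_ ?_⟩
      · rw [addx, hx]; simp
      · rw [adda, hs]; simp [h0])
    (by
      intro a b ha hb
      have hx : a.x = 0 := NNReal.coe_injective ha
      have hy : b.x = 0 := NNReal.coe_injective hb
      refine JK.ext ?_ ?_
      · rw [mulx, hx, zero_mul]; rfl
      · rw [mula, hx, hy]; simp; rfl)
  have hx : ∀ x, (σ x).x = x := fun x => NNReal.coe_injective (h1 x)
  refine ⟨fun x => (σ x).a, ?_, ?_⟩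
  · intro x y
    simp only [h3, mula, hx]
  · intro x y
    simp only [h2, adda, hx]

end JKT

/-- Jessen–Karpf–Thorup: every symmetric, positively 1-homogeneous solution of
the cocycle equation on `ℝ₊₊` has the form `F(x,y) = φ(x+y) − φ(x) − φ(y)`
where `φ(xy) = x·φ(y) + y·φ(x)`. -/
theorem jessen_karpf_thorup_cocycle
    (F : ℝ → ℝ → ℝ)
    (hsym : ∀ x y : ℝ, 0 < x → 0 < y → F x y = F y x)
    (hhom : ∀ t x y : ℝ, 0 < t → 0 < x → 0 < y → F (t * x) (t * y) = t * F x y)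
    (hcoc : ∀ x y z : ℝ, 0 < x → 0 < y → 0 < z →
      F x y + F (x + y) z = F x (y + z) + F y z) :
    ∃ φ : ℝ → ℝ,
      (∀ x y : ℝ, 0 < x → 0 < y → φ (x * y) = x * φ y + y * φ x) ∧
      (∀ x y : ℝ, 0 < x → 0 < y → F x y = φ (x + y) - φ x - φ y) := by
  classical
  obtain ⟨φ, h1, h2⟩ := JKT.main (fun x y => if x = 0 ∨ y = 0 then 0 else F x y)
    (by
      intro x y
      by_cases hx : x = 0
      · simp [hx]
      by_cases hy : y = 0
      · simp [hy]
      simp only [hx, hy, or_self, if_false]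
      exact hsym _ _ (NNReal.coe_pos.2 (pos_iff_ne_zero.2 hx))
        (NNReal.coe_pos.2 (pos_iff_ne_zero.2 hy)))
    (by intro y; simp)
    (by
      intro t x y
      by_cases ht : t = 0
      · simp [ht]
      by_cases hx : x = 0
      · simp [hx]
      by_cases hy : y = 0
      · simp [hy]
      simp only [hx, hy, ht, mul_eq_zero, or_self, if_false, NNReal.coe_mul]
      exact hhom _ _ _ (NNReal.coe_pos.2 (pos_iff_ne_zero.2 ht))
        (NNReal.coe_pos.2 (pos_iff_ne_zero.2 hx))
        (NNReal.coe_pos.2 (pos_iff_ne_zero.2 hy)))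
    (by
      intro x y z
      by_cases hx : x = 0
      · simp [hx]
      by_cases hy : y = 0
      · simp [hy]
      by_cases hz : z = 0
      · simp [hz]
      simp only [hx, hy, hz, add_eq_zero, and_self, or_self, if_false, NNReal.coe_add]
      exact hcoc _ _ _ (NNReal.coe_pos.2 (pos_iff_ne_zero.2 hx))
        (NNReal.coe_pos.2 (pos_iff_ne_zero.2 hy))
        (NNReal.coe_pos.2 (pos_iff_ne_zero.2 hz)))
  refine ⟨fun x => φ x.toNNReal, ?_, ?_⟩
  · intro x y hx hy
    have := h1 x.toNNReal y.toNNReal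
    rw [← Real.toNNReal_mul hx.le, Real.coe_toNNReal x hx.le, Real.coe_toNNReal y hy.le] at this
    exact this
  · intro x y hx hy
    have := h2 x.toNNReal y.toNNReal
    rw [← Real.toNNReal_add hx.le hy.le, Real.coe_toNNReal x hx.le,
      Real.coe_toNNReal y hy.le, if_neg (by simp [hx, hy])] at this
    change F x y = φ (x + y).toNNReal - φ x.toNNReal - φ y.toNNReal
    linarith
end

section
/- Let α ∈ ℝ with α ∉ {0,1}, and let F : ℝ₊₊ × ℝ₊₊ → ℝ be symmetric (F(x,y) = F(y,x) for all x,y > 0), positively homogeneous of degree α (F(tx,ty) = t^α·F(x,y) for all t,x,y > 0), and satisfy the cocycle equation F(x,y) + F(x+y,z) = F(x,y+z) + F(y,z) for all x,y,z > 0. Then there exists a constant c ∈ ℝ such that F(x,y) = c·[(x+y)^α − x^α − y^α] for all x,y > 0. -/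
/-- Maksa: every symmetric, positively α-homogeneous (α ∉ {0,1}) solution of
the cocycle equation on `ℝ₊₊` has the form `F(x,y) = c·[(x+y)^α − x^α − y^α]`. -/
theorem maksa_cocycle_solution
    (α : ℝ) (hα0 : α ≠ 0) (hα1 : α ≠ 1)
    (F : ℝ → ℝ → ℝ)
    (hsym : ∀ x y : ℝ, 0 < x → 0 < y → F x y = F y x)
    (hhom : ∀ t x y : ℝ, 0 < t → 0 < x → 0 < y →
      F (t * x) (t * y) = t ^ α * F x y)
    (hcoc : ∀ x y z : ℝ, 0 < x → 0 < y → 0 < z →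
      F x y + F (x + y) z = F x (y + z) + F y z) :
    ∃ c : ℝ, ∀ x y : ℝ, 0 < x → 0 < y →
      F x y = c * ((x + y) ^ α - x ^ α - y ^ α) := by
  have h2 : (2:ℝ) ^ α - 2 ≠ 0 := by
    intro h
    apply hα1
    have h3 : (2:ℝ) ^ α = 2 ^ (1:ℝ) := by rw [Real.rpow_one]; linarith
    have h4 := congrArg Real.log h3
    rw [Real.log_rpow two_pos, Real.log_rpow two_pos] at h4
    exact mul_right_cancel₀ (Real.log_pos one_lt_two).ne' h4
  have hd : ∀ x : ℝ, 0 < x → F x x = x ^ α * F 1 1 := by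
    intro x hx
    have := hhom x 1 1 hx one_pos one_pos
    rwa [mul_one] at this
  refine ⟨F 1 1 / (2 ^ α - 2), fun x y hx hy => ?_⟩
  have hxy : 0 < x + y := by positivity
  have e1 := hcoc x x (2 * y) hx hx (by positivity)
  have e2 := hcoc x y y hx hy hy
  have e3 := hcoc x (x + y) y hx hxy hy
  have e4 := hcoc (x + y) x y hxy hx hy
  have e5 := hsym x (x + y) hx hxy
  have e6 := hhom 2 x y two_pos hx hy
  rw [show x + x = 2 * x by ring] at e1
  rw [show y + y = 2 * y by ring] at e2
  rw [show x + (x + y) = 2 * x + y by ring, show x + y + y = x + 2 * y by ring] at e3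
  rw [show x + y + x = 2 * x + y by ring] at e4
  have d1 := hd x hx
  have d2 := hd y hy
  have d3 := hd (x + y) hxy
  have key : F x y * (2 ^ α - 2) = F 1 1 * ((x + y) ^ α - x ^ α - y ^ α) := by
    linarith
  rw [div_mul_eq_mul_div, eq_div_iff h2, key]
end

section
/- Let ε₁, ε₂ ≥ 0 and let H : D → ℝ satisfy: (i) |H(x,y,z) − H(σ(x),σ(y),σ(z))| ≤ ε₁ for all (x,y,z) ∈ D and every permutation σ of the three coordinates; (ii) |H(x,y,z) − H(x+y,0,z) − H(x,y,0)| ≤ ε₂ for all (x,y,z) ∈ D°. Then the function F : ℝ₊₊ × ℝ₊₊ → ℝ defined by F(x,y) = H(x,y,0) satisfies |F(x+y,z) + F(x,y) − F(x,y+z) − F(y,z)| ≤ 2ε₂ + 4ε₁ for all x,y,z > 0, and |F(x,y) − F(y,x)| ≤ ε₁ for all x,y > 0. -/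
/-- If `H` is approximately symmetric on `D` and approximately satisfies the
entropy equation on `D°`, then `F(x,y) = H(x,y,0)` approximately satisfies the
cocycle equation with bound `2ε₂ + 4ε₁` and is approximately symmetric with
bound `ε₁`. -/
theorem approx_entropy_gives_approx_cocycle
    (ε₁ ε₂ : ℝ) (hε₁ : 0 ≤ ε₁) (hε₂ : 0 ≤ ε₂)
    (H : ℝ → ℝ → ℝ → ℝ)
    (hsym : ∀ x y z : ℝ, 0 ≤ x → 0 ≤ y → 0 ≤ z → 0 < x + y + z →
      ∀ σ : Equiv.Perm (Fin 3),
        |H x y z - H (![x, y, z] (σ 0)) (![x, y, z] (σ 1)) (![x, y, z] (σ 2))| ≤ ε₁)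
    (heq : ∀ x y z : ℝ, 0 < x → 0 < y → 0 < z →
      |H x y z - H (x + y) 0 z - H x y 0| ≤ ε₂)
    (F : ℝ → ℝ → ℝ) (hF : ∀ x y : ℝ, 0 < x → 0 < y → F x y = H x y 0) :
    (∀ x y z : ℝ, 0 < x → 0 < y → 0 < z →
      |F (x + y) z + F x y - F x (y + z) - F y z| ≤ 2 * ε₂ + 4 * ε₁) ∧
    (∀ x y : ℝ, 0 < x → 0 < y → |F x y - F y x| ≤ ε₁) := by
  have hrot : ∀ x y z : ℝ, 0 ≤ x → 0 ≤ y → 0 ≤ z → 0 < x + y + z →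
      |H x y z - H y z x| ≤ ε₁ := fun x y z hx hy hz h =>
    hsym x y z hx hy hz h (finRotate 3)
  have hsw : ∀ x y z : ℝ, 0 ≤ x → 0 ≤ y → 0 ≤ z → 0 < x + y + z →
      |H x y z - H x z y| ≤ ε₁ := fun x y z hx hy hz h =>
    hsym x y z hx hy hz h (Equiv.swap 1 2)
  have hsw' : ∀ x y z : ℝ, 0 ≤ x → 0 ≤ y → 0 ≤ z → 0 < x + y + z →
      |H x y z - H y x z| ≤ ε₁ := fun x y z hx hy hz h =>
    hsym x y z hx hy hz h (Equiv.swap 0 1)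
  refine ⟨fun x y z hx hy hz => ?_, fun x y hx hy => ?_⟩
  · rw [hF (x + y) z (by linarith) hz, hF x y hx hy, hF x (y + z) hx (by linarith), hF y z hy hz]
    have h1 := abs_le.1 (heq x y z hx hy hz)
    have h2 := abs_le.1 (heq y z x hy hz hx)
    have h3 := abs_le.1 (hrot x y z hx.le hy.le hz.le (by linarith))
    have h4 := abs_le.1 (hsw (x + y) z 0 (by linarith) hz.le le_rfl (by linarith))
    have h5 := abs_le.1 (hrot x (y + z) 0 hx.le (by linarith) le_rfl (by linarith))
    rw [abs_le]
    constructor <;> linarith [h1.1, h1.2, h2.1, h2.2, h3.1, h3.2, h4.1, h4.2, h5.1, h5.2]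
  · rw [hF x y hx hy, hF y x hy hx]
    exact hsw' x y 0 hx.le hy.le le_rfl (by linarith)
end

section
/- Let δ, ε₃ ≥ 0 and let F : ℝ₊₊ × ℝ₊₊ → ℝ satisfy |F(x+y,z) + F(x,y) − F(x,y+z) − F(y,z)| ≤ δ for all x,y,z > 0 and |F(tx,ty) − F(x,y)| ≤ ε₃ for all t,x,y > 0. Then |F(x,y) − F(1,1)| ≤ 4ε₃ + 6δ for all x,y > 0. -/
/-- Key estimate in the α = 0 case of the stability of the entropy equation:
if `F` satisfies an approximate cocycle equation with bound `δ` and is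
approximately positively homogeneous of degree 0 with bound `ε₃`, then
`|F(x,y) − F(1,1)| ≤ 4ε₃ + 6δ` for all `x, y > 0`. -/
theorem approx_cocycle_approx_zero_homogeneous_is_approx_constant
    (δ ε₃ : ℝ) (hδ : 0 ≤ δ) (hε₃ : 0 ≤ ε₃)
    (F : ℝ → ℝ → ℝ)
    (hcoc : ∀ x y z : ℝ, 0 < x → 0 < y → 0 < z →
      |F (x + y) z + F x y - F x (y + z) - F y z| ≤ δ)
    (hhom : ∀ t x y : ℝ, 0 < t → 0 < x → 0 < y → |F (t * x) (t * y) - F x y| ≤ ε₃) :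
    ∀ x y : ℝ, 0 < x → 0 < y → |F x y - F 1 1| ≤ 4 * ε₃ + 6 * δ := by
  have key : ∀ x y : ℝ, 0 < x → 0 < y →
      |2 * F x y - F y x - F 1 1| ≤ 4 * ε₃ + 6 * δ := by
    intro x y hx hy
    have hxy : 0 < x + y := add_pos hx hy
    have a1 := hcoc x x (y + y) hx hx (add_pos hy hy)
    have a2 := hcoc x y y hx hy hy
    have b1 := hcoc x y (x + y) hx hy hxy
    have b2 := hcoc y x y hy hx hy
    have c1 := hhom 2 x y two_pos hx hy
    have c2 := hhom x 1 1 hx one_pos one_pos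
    have c3 := hhom y 1 1 hy one_pos one_pos
    have c4 := hhom (x + y) 1 1 hxy one_pos one_pos
    rw [mul_one] at c2 c3 c4
    rw [two_mul, two_mul] at c1
    rw [← add_assoc x y y] at a1
    rw [add_comm y x] at b2
    rw [show y + (x + y) = x + y + y by ring] at b1
    rw [abs_le] at a1 a2 b1 b2 c1 c2 c3 c4 ⊢
    constructor <;> linarith
  intro x y hx hy
  have h1 := key x y hx hy
  have h2 := key y x hy hx
  rw [abs_le] at h1 h2 ⊢
  constructor <;> linarith
end
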